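/- arXiv:2012.12022 — 10 statements merged into one kernel-verified Lean document; each statement's English description precedes it below -/
import Mathlib

section
/- (Approximate factorization) For every n ≥ 1 there exist constants C₁, C₂ > 0 depending only on n such that for all weakly decreasing λ, x ∈ ℝ^{n+1} one has C₁·∏_{k=1}^n I_k⁽ⁿ⁾(λ;x) ≤ I⁽ⁿ⁾(λ;x) ≤ C₂·∏_{k=1}^n I_k⁽ⁿ⁾(λ;x). -/
open Finset MeasureTheory

/-- The iterated integral `I⁽ⁿ⁾(λ;x)` over the box `y_k ∈ [x_{k+1}, x_k]`, `k = 1,…,n`, of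
`exp(−∑_k (λ_k−λ_{n+1})(x_k−y_k)) · ∏_{i<j≤n} (y_i−y_j)(λ_i−λ_j)/(1+(y_i−y_j)(λ_i−λ_j))`. -/
noncomputable def Iint (n : ℕ) (lam x : Fin (n + 1) → ℝ) : ℝ :=
  ∫ y in Set.Icc (fun k : Fin n => x k.succ) (fun k : Fin n => x k.castSucc),
    Real.exp (-∑ k : Fin n, (lam k.castSucc - lam (Fin.last n)) * (x k.castSucc - y k)) *
      ∏ i : Fin n, ∏ j ∈ Finset.Ioi i,
        ((y i - y j) * (lam i.castSucc - lam j.castSucc) /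
          (1 + (y i - y j) * (lam i.castSucc - lam j.castSucc)))

/-- The one-dimensional factor `I_k⁽ⁿ⁾(λ;x)`
`= ∫_{x_{k+1}}^{x_k} e^{−(λ_k−λ_{n+1})(x_k−y)} ∏_{j<k} (x_j−y)(λ_j−λ_k)/(1+(x_j−y)(λ_j−λ_k)) dy`. -/
noncomputable def Ifac (n : ℕ) (lam x : Fin (n + 1) → ℝ) (k : Fin n) : ℝ :=
  ∫ y in (x k.succ)..(x k.castSucc),
    Real.exp (-(lam k.castSucc - lam (Fin.last n)) * (x k.castSucc - y)) *
      ∏ j ∈ Finset.Iio k,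
        ((x j.castSucc - y) * (lam j.castSucc - lam k.castSucc) /
          (1 + (x j.castSucc - y) * (lam j.castSucc - lam k.castSucc)))

/-- `t ↦ t / (1 + t)` is increasing on the nonnegative reals. -/
lemma div_one_add_mono {s t : ℝ} (hs : 0 ≤ s) (hst : s ≤ t) : s / (1 + s) ≤ t / (1 + t) := by
  rw [div_le_div_iff₀ (by linarith) (by linarith)]
  nlinarith

/-- `t ↦ t / (1 + t)` at most doubles when its argument doubles. -/
lemma half_mul_div_one_add_le {s t : ℝ} (ht : 0 ≤ t) (hst : t ≤ 2 * s) :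
    1 / 2 * (t / (1 + t)) ≤ s / (1 + s) := by
  refine le_trans ?_ (div_one_add_mono (s := t / 2) (by linarith) (by linarith))
  rw [← mul_div_assoc, div_le_div_iff₀ (by linarith) (by linarith)]
  nlinarith

lemma prod_Iio_comm_prod_Ioi {n : ℕ} (f : Fin n → Fin n → ℝ) :
    ∏ j, ∏ i ∈ Iio j, f i j = ∏ i, ∏ j ∈ Ioi i, f i j :=
  prod_comm' (by simp)

/-- The integrand of `Iint`. -/
noncomputable def IintIntegrand (n : ℕ) (lam x : Fin (n + 1) → ℝ) (y : Fin n → ℝ) : ℝ :=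
  Real.exp (-∑ k : Fin n, (lam k.castSucc - lam (Fin.last n)) * (x k.castSucc - y k)) *
    ∏ i : Fin n, ∏ j ∈ Finset.Ioi i,
      ((y i - y j) * (lam i.castSucc - lam j.castSucc) /
        (1 + (y i - y j) * (lam i.castSucc - lam j.castSucc)))

/-- The product of the integrands of the factors `Ifac`, as a function on the box. -/
noncomputable def prodIntegrand (n : ℕ) (lam x : Fin (n + 1) → ℝ) (y : Fin n → ℝ) : ℝ :=
  Real.exp (-∑ k : Fin n, (lam k.castSucc - lam (Fin.last n)) * (x k.castSucc - y k)) *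
    ∏ i : Fin n, ∏ j ∈ Finset.Ioi i,
      ((x i.castSucc - y j) * (lam i.castSucc - lam j.castSucc) /
        (1 + (x i.castSucc - y j) * (lam i.castSucc - lam j.castSucc)))

lemma prod_Ifac_eq_setIntegral {n : ℕ} (lam x : Fin (n + 1) → ℝ) (hx : Antitone x) :
    ∏ k, Ifac n lam x k =
      ∫ y in Set.Icc (fun k : Fin n => x k.succ) (fun k : Fin n => x k.castSucc),
        prodIntegrand n lam x y := by
  rw [← Set.pi_univ_Icc, volume_pi, Measure.restrict_pi_pi]
  have hprod : ∀ y, prodIntegrand n lam x y = ∏ k : Fin n,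
      (Real.exp (-(lam k.castSucc - lam (Fin.last n)) * (x k.castSucc - y k)) *
        ∏ j ∈ Finset.Iio k, ((x j.castSucc - y k) * (lam j.castSucc - lam k.castSucc) /
          (1 + (x j.castSucc - y k) * (lam j.castSucc - lam k.castSucc)))) := by
    intro y
    rw [prod_mul_distrib, prod_Iio_comm_prod_Ioi (fun j k =>
      (x j.castSucc - y k) * (lam j.castSucc - lam k.castSucc) /
        (1 + (x j.castSucc - y k) * (lam j.castSucc - lam k.castSucc))), ← Real.exp_sum]
    simp only [prodIntegrand, neg_mul, sum_neg_distrib]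
  simp only [hprod]
  rw [integral_fintype_prod_eq_prod (fun (k : Fin n) (t : ℝ) =>
    Real.exp (-(lam k.castSucc - lam (Fin.last n)) * (x k.castSucc - t)) *
      ∏ j ∈ Finset.Iio k, ((x j.castSucc - t) * (lam j.castSucc - lam k.castSucc) /
        (1 + (x j.castSucc - t) * (lam j.castSucc - lam k.castSucc))))]
  refine prod_congr rfl fun k _ => ?_
  rw [Ifac, intervalIntegral.integral_of_le (hx (Fin.castSucc_lt_succ).le),
    integral_Icc_eq_integral_Ioc]

section Box

variable {n : ℕ} {lam x : Fin (n + 1) → ℝ} {y : Fin n → ℝ} {i j : Fin n}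

lemma lam_sub_nonneg (hl : Antitone lam) (hij : i < j) :
    0 ≤ lam i.castSucc - lam j.castSucc :=
  sub_nonneg.2 (hl (Fin.castSucc_le_castSucc_iff.2 hij.le))

/-- On the box, `x_j ≤ y_i` for `i < j`. -/
lemma castSucc_le_of_mem_box (hx : Antitone x)
    (hy : y ∈ Set.Icc (fun k : Fin n => x k.succ) (fun k : Fin n => x k.castSucc))
    (hij : i < j) : x j.castSucc ≤ y i :=
  (hx (Fin.succ_le_castSucc_iff.2 hij)).trans (hy.1 i)

lemma sub_nonneg_of_mem_box (hx : Antitone x)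
    (hy : y ∈ Set.Icc (fun k : Fin n => x k.succ) (fun k : Fin n => x k.castSucc))
    (hij : i < j) : 0 ≤ y i - y j :=
  sub_nonneg.2 ((hy.2 j).trans (castSucc_le_of_mem_box hx hy hij))

lemma IintIntegrand_nonneg (hl : Antitone lam) (hx : Antitone x)
    (hy : y ∈ Set.Icc (fun k : Fin n => x k.succ) (fun k : Fin n => x k.castSucc)) :
    0 ≤ IintIntegrand n lam x y := by
  refine mul_nonneg (Real.exp_nonneg _) (prod_nonneg fun i _ => prod_nonneg fun j hj => ?_)
  have := mul_nonneg (sub_nonneg_of_mem_box hx hy (mem_Ioi.1 hj))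
    (lam_sub_nonneg hl (mem_Ioi.1 hj))
  positivity

lemma prodIntegrand_nonneg (hl : Antitone lam) (hx : Antitone x)
    (hy : y ∈ Set.Icc (fun k : Fin n => x k.succ) (fun k : Fin n => x k.castSucc)) :
    0 ≤ prodIntegrand n lam x y := by
  refine mul_nonneg (Real.exp_nonneg _) (prod_nonneg fun i _ => prod_nonneg fun j hj => ?_)
  have := mul_nonneg ((sub_nonneg_of_mem_box hx hy (mem_Ioi.1 hj)).trans
    (sub_le_sub_right (hy.2 i) (y j))) (lam_sub_nonneg hl (mem_Ioi.1 hj))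
  positivity

lemma IintIntegrand_le_prodIntegrand (hl : Antitone lam) (hx : Antitone x)
    (hy : y ∈ Set.Icc (fun k : Fin n => x k.succ) (fun k : Fin n => x k.castSucc)) :
    IintIntegrand n lam x y ≤ prodIntegrand n lam x y := by
  have hnn : ∀ i : Fin n, ∀ j ∈ Ioi i, 0 ≤ (y i - y j) * (lam i.castSucc - lam j.castSucc) :=
    fun i j hj => mul_nonneg (sub_nonneg_of_mem_box hx hy (mem_Ioi.1 hj))
      (lam_sub_nonneg hl (mem_Ioi.1 hj))
  have hdiv : ∀ i : Fin n, ∀ j ∈ Ioi i, 0 ≤ (y i - y j) * (lam i.castSucc - lam j.castSucc) /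
      (1 + (y i - y j) * (lam i.castSucc - lam j.castSucc)) := fun i j hj => by
    have := hnn i j hj
    positivity
  refine mul_le_mul_of_nonneg_left (prod_le_prod (fun i _ => prod_nonneg (hdiv i)) fun i _ =>
    prod_le_prod (hdiv i) fun j hj => div_one_add_mono (hnn i j hj) ?_) (Real.exp_nonneg _)
  exact mul_le_mul_of_nonneg_right (sub_le_sub_right (hy.2 i) (y j))
    (lam_sub_nonneg hl (mem_Ioi.1 hj))

/-- Moving the variables halfway towards the upper corner of the box bounds the integrand of
`Iint` from below by the product of the integrands of the factors. -/
lemma prodIntegrand_le_IintIntegrand_midpoint (hl : Antitone lam) (hx : Antitone x)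
    (hy : y ∈ Set.Icc (fun k : Fin n => x k.succ) (fun k : Fin n => x k.castSucc)) :
    (∏ i : Fin n, ∏ _j ∈ Ioi i, (1 / 2 : ℝ)) * prodIntegrand n lam x y ≤
      IintIntegrand n lam x ((1 / 2 : ℝ) • ((fun k : Fin n => x k.castSucc) + y)) := by
  have hnn : ∀ i : Fin n, ∀ j ∈ Ioi i,
      0 ≤ (x i.castSucc - y j) * (lam i.castSucc - lam j.castSucc) :=
    fun i j hj => mul_nonneg ((sub_nonneg_of_mem_box hx hy (mem_Ioi.1 hj)).trans
      (sub_le_sub_right (hy.2 i) (y j))) (lam_sub_nonneg hl (mem_Ioi.1 hj))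
  have hdiv : ∀ i : Fin n, ∀ j ∈ Ioi i,
      0 ≤ 1 / 2 * ((x i.castSucc - y j) * (lam i.castSucc - lam j.castSucc) /
        (1 + (x i.castSucc - y j) * (lam i.castSucc - lam j.castSucc))) := fun i j hj => by
    have := hnn i j hj
    positivity
  rw [prodIntegrand, mul_left_comm]
  simp only [← prod_mul_distrib]
  refine mul_le_mul (Real.exp_le_exp.2 (neg_le_neg (sum_le_sum fun k _ => ?_)))
    (prod_le_prod (fun i _ => prod_nonneg (hdiv i)) fun i _ =>
      prod_le_prod (hdiv i) fun j hj => half_mul_div_one_add_le (hnn i j hj) ?_)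
    (prod_nonneg fun i _ => prod_nonneg (hdiv i)) (Real.exp_nonneg _)
  · refine mul_le_mul_of_nonneg_left ?_ (sub_nonneg.2 (hl (Fin.le_last _)))
    have : y k ≤ x k.castSucc := hy.2 k
    simp only [Pi.smul_apply, Pi.add_apply, smul_eq_mul]
    linarith
  · rw [← mul_assoc]
    refine mul_le_mul_of_nonneg_right ?_ (lam_sub_nonneg hl (mem_Ioi.1 hj))
    have := castSucc_le_of_mem_box hx hy (mem_Ioi.1 hj)
    simp only [Pi.smul_apply, Pi.add_apply, smul_eq_mul]
    linarith

lemma midpoint_mem_box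
    (hy : y ∈ Set.Icc (fun k : Fin n => x k.succ) (fun k : Fin n => x k.castSucc)) :
    (1 / 2 : ℝ) • ((fun k : Fin n => x k.castSucc) + y) ∈
      Set.Icc (fun k : Fin n => x k.succ) (fun k : Fin n => x k.castSucc) := by
  constructor <;> intro k <;> have h₁ := hy.1 k <;> have h₂ := hy.2 k <;>
    simp only [Pi.smul_apply, Pi.add_apply, smul_eq_mul] at * <;> linarith

lemma integrableOn_IintIntegrand (hl : Antitone lam) (hx : Antitone x) :
    IntegrableOn (IintIntegrand n lam x)
      (Set.Icc (fun k : Fin n => x k.succ) (fun k : Fin n => x k.castSucc)) := by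
  refine ContinuousOn.integrableOn_compact isCompact_Icc ?_
  refine ContinuousOn.mul (by fun_prop) (continuousOn_finsetProd _ fun i _ =>
    continuousOn_finsetProd _ fun j hj => ContinuousOn.div (by fun_prop) (by fun_prop) ?_)
  intro y hy
  have := mul_nonneg (sub_nonneg_of_mem_box hx hy (mem_Ioi.1 hj))
    (lam_sub_nonneg hl (mem_Ioi.1 hj))
  positivity

lemma integrableOn_prodIntegrand (hl : Antitone lam) (hx : Antitone x) :
    IntegrableOn (prodIntegrand n lam x)
      (Set.Icc (fun k : Fin n => x k.succ) (fun k : Fin n => x k.castSucc)) := by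
  refine ContinuousOn.integrableOn_compact isCompact_Icc ?_
  refine ContinuousOn.mul (by fun_prop) (continuousOn_finsetProd _ fun i _ =>
    continuousOn_finsetProd _ fun j hj => ContinuousOn.div (by fun_prop) (by fun_prop) ?_)
  intro y hy
  have := mul_nonneg ((sub_nonneg_of_mem_box hx hy (mem_Ioi.1 hj)).trans
    (sub_le_sub_right (hy.2 i) (y j))) (lam_sub_nonneg hl (mem_Ioi.1 hj))
  positivity

end Box

/-- The substitution `y ↦ (c + y) / 2` in an integral over `ℝⁿ`. -/
lemma integral_comp_half_smul_add {n : ℕ} (F : (Fin n → ℝ) → ℝ) (c : Fin n → ℝ) :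
    ∫ y, F ((1 / 2 : ℝ) • (c + y)) = 2 ^ n * ∫ y, F y := by
  rw [integral_add_left_eq_self (fun y => F ((1 / 2 : ℝ) • y)) c, Measure.integral_comp_smul]
  simp

/-- Approximate factorization: `I⁽ⁿ⁾(λ;x) ≍ ∏_{k=1}^n I_k⁽ⁿ⁾(λ;x)` for weakly decreasing
`λ, x ∈ ℝ^{n+1}`, with constants depending only on `n`. -/
theorem approx_factorization (n : ℕ) (hn : 1 ≤ n) :
    ∃ C₁ C₂ : ℝ, 0 < C₁ ∧ 0 < C₂ ∧
      ∀ lam x : Fin (n + 1) → ℝ, Antitone lam → Antitone x →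
        C₁ * (∏ k : Fin n, Ifac n lam x k) ≤ Iint n lam x ∧
        Iint n lam x ≤ C₂ * (∏ k : Fin n, Ifac n lam x k) := by
  refine ⟨(2 ^ n)⁻¹ * ∏ i : Fin n, ∏ _j ∈ Ioi i, (1 / 2 : ℝ), 1, by positivity, one_pos,
    fun lam x hl hx => ?_⟩
  rw [prod_Ifac_eq_setIntegral lam x hx, one_mul]
  constructor
  · rw [mul_assoc, inv_mul_le_iff₀ (by positivity), ← integral_const_mul,
      ← integral_indicator measurableSet_Icc, Iint, ← integral_indicator measurableSet_Icc,
      ← integral_comp_half_smul_add _ (fun k : Fin n => x k.castSucc)]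
    have hint := (integrable_indicator_iff measurableSet_Icc).2
      (integrableOn_IintIntegrand hl hx)
    refine integral_mono_of_nonneg (.of_forall fun y => Set.indicator_nonneg (fun y hy =>
      mul_nonneg (by positivity) (prodIntegrand_nonneg hl hx hy)) y)
      ((hint.comp_smul (one_div_ne_zero two_ne_zero)).comp_add_left _) (.of_forall fun y => ?_)
    by_cases hy : y ∈ Set.Icc (fun k : Fin n => x k.succ) (fun k : Fin n => x k.castSucc)
    · simp only [Set.indicator_of_mem hy, Set.indicator_of_mem (midpoint_mem_box hy)]
      exact prodIntegrand_le_IintIntegrand_midpoint hl hx hy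
    · simp only [Set.indicator_of_notMem hy]
      exact Set.indicator_nonneg (fun z hz => IintIntegrand_nonneg hl hx hz) _
  · exact setIntegral_mono_on (integrableOn_IintIntegrand hl hx)
      (integrableOn_prodIntegrand hl hx) measurableSet_Icc
      fun y hy => IintIntegrand_le_prodIntegrand hl hx hy
end

section
/- (Recursive estimate) For every n ≥ 1 there exist constants C₁, C₂ > 0 depending only on n such that for all weakly decreasing λ, x ∈ ℝ^{n+2} with x_1 − x_2 ≥ x_{n+1} − x_{n+2}, one has C₁·P ≤ I⁽ⁿ⁺¹⁾(λ;x) · I⁽ⁿ⁻¹⁾(λ_2,…,λ_n,λ_{n+2}; x_2,…,x_{n+1}) ≤ C₂·P, where P = I⁽ⁿ⁾(λ_1,…,λ_n,λ_{n+2}; x_1,…,x_{n+1}) · [(x_1−x_{n+1})(λ_1−λ_{n+1})/(1+(x_1−x_{n+1})(λ_1−λ_{n+1}))] · I⁽ⁿ⁾(λ_2,…,λ_{n+1},λ_{n+2}; x_2,…,x_{n+2}). -/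
open Finset MeasureTheory

/-- The saturation function `u ↦ u / (1 + u)`. -/
noncomputable def sat (u : ℝ) : ℝ := u / (1 + u)

/-- The function `b / (1 + μ b)`, comparable with `min b μ⁻¹`. -/
noncomputable def ramp (μ b : ℝ) : ℝ := b / (1 + μ * b)

lemma sat_nonneg {u : ℝ} (hu : 0 ≤ u) : 0 ≤ sat u := by unfold sat; positivity

lemma ramp_nonneg {μ b : ℝ} (hμ : 0 ≤ μ) (hb : 0 ≤ b) : 0 ≤ ramp μ b := by
  unfold ramp; positivity

lemma sat_mono {u v : ℝ} (hu : 0 ≤ u) (huv : u ≤ v) : sat u ≤ sat v := by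
  unfold sat
  rw [div_le_div_iff₀ (by linarith) (by linarith)]
  nlinarith

lemma sat_mul_le {c u : ℝ} (hc : 1 ≤ c) (hu : 0 ≤ u) : sat (c * u) ≤ c * sat u := by
  unfold sat
  rw [← mul_div_assoc]
  gcongr
  nlinarith

lemma ramp_mono {μ a b : ℝ} (hμ : 0 ≤ μ) (ha : 0 ≤ a) (hab : a ≤ b) : ramp μ a ≤ ramp μ b := by
  have hb : 0 ≤ b := ha.trans hab
  unfold ramp
  rw [div_le_div_iff₀ (by positivity) (by positivity)]
  nlinarith

lemma ramp_two_mul_le {μ b : ℝ} (hμ : 0 ≤ μ) (hb : 0 ≤ b) : ramp μ (2 * b) ≤ 2 * ramp μ b := by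
  unfold ramp
  rw [← mul_div_assoc]
  gcongr
  linarith

lemma ramp_le {μ b : ℝ} (hμ : 0 ≤ μ) (hb : 0 ≤ b) : ramp μ b ≤ b :=
  div_le_self hb (by nlinarith [mul_nonneg hμ hb])

lemma mul_ramp_le_one {μ b : ℝ} (hμ : 0 ≤ μ) (hb : 0 ≤ b) : μ * ramp μ b ≤ 1 := by
  unfold ramp
  rw [← mul_div_assoc, div_le_one (by positivity)]
  linarith

lemma le_ramp_mul {μ b t : ℝ} (hμ : 0 ≤ μ) (ht : 0 ≤ t) (htb : t ≤ b) :
    t ≤ ramp μ b * (1 + μ * t) := by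
  have hb : 0 ≤ b := ht.trans htb
  unfold ramp
  rw [div_mul_eq_mul_div, le_div_iff₀ (by positivity)]
  nlinarith

lemma sat_add_ramp {a b l μ : ℝ} (ha : 0 ≤ a) (hb : 0 ≤ b) (hl : 0 ≤ l) (hμ : 0 ≤ μ) :
    sat ((a + ramp μ b) * l) =
      (a + b + a * b * μ) * l / (1 + μ * b + (a + b + a * b * μ) * l) := by
  have h1 : 1 + μ * b ≠ 0 := by positivity
  have h2 : 1 + μ * b + (a + b + a * b * μ) * l ≠ 0 := by positivity
  have h3 : 1 + (a + ramp μ b) * l ≠ 0 := by have := ramp_nonneg hμ hb; positivity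
  unfold sat
  rw [div_eq_div_iff h3 h2]
  unfold ramp
  field_simp
  ring

/-- Passing from `a` to `a + b` in `ramp` compensates the shift by `ramp μ b` in `sat`. -/
lemma ramp_mul_sat_le {a b l μ : ℝ} (ha : 0 ≤ a) (hb : 0 ≤ b) (hl : 0 ≤ l) (hμ : 0 ≤ μ) :
    ramp (l + μ) a * sat ((a + ramp μ b) * l) ≤ 4 * (ramp (l + μ) (a + b) * sat (a * l)) := by
  rw [sat_add_ramp ha hb hl hμ]
  unfold ramp sat
  rw [div_mul_div_comm, div_mul_div_comm, ← mul_div_assoc,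
    div_le_div_iff₀ (by positivity) (by positivity), ← sub_nonneg]
  ring_nf
  positivity

lemma ramp_mul_sat_ge {a b l μ : ℝ} (ha : 0 ≤ a) (hb : 0 ≤ b) (hl : 0 ≤ l) (hμ : 0 ≤ μ) :
    ramp (l + μ) (a + b) * sat (a * l) ≤ 4 * (ramp (l + μ) a * sat ((a + ramp μ b) * l)) := by
  rw [sat_add_ramp ha hb hl hμ]
  unfold ramp sat
  rw [div_mul_div_comm, div_mul_div_comm, ← mul_div_assoc,
    div_le_div_iff₀ (by positivity) (by positivity), ← sub_nonneg]
  ring_nf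
  positivity

lemma mul_prod_Ico_le {r f g : ℕ → ℝ} {c : ℝ} (hc : 0 ≤ c) {k n : ℕ} (hkn : k ≤ n)
    (hf : ∀ j ∈ Ico k n, 0 ≤ f j) (hg : ∀ j ∈ Ico k n, 0 ≤ g j)
    (h : ∀ j ∈ Ico k n, r j * f j ≤ c * (r (j + 1) * g j)) :
    r k * ∏ j ∈ Ico k n, f j ≤ c ^ (n - k) * (r n * ∏ j ∈ Ico k n, g j) := by
  induction n, hkn using Nat.le_induction with
  | base => simp
  | succ n hkn ih =>
    have hsub : ∀ j ∈ Ico k n, j ∈ Ico k (n + 1) := fun j hj => by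
      simp only [mem_Ico] at hj ⊢; omega
    have hn : n ∈ Ico k (n + 1) := by simp only [mem_Ico]; omega
    have ih' := ih (fun j hj => hf j (hsub j hj)) (fun j hj => hg j (hsub j hj))
      (fun j hj => h j (hsub j hj))
    have hG : 0 ≤ ∏ j ∈ Ico k n, g j := prod_nonneg fun j hj => hg j (hsub j hj)
    rw [prod_Ico_succ_top hkn, prod_Ico_succ_top hkn, Nat.sub_add_comm hkn, pow_succ]
    calc r k * ((∏ j ∈ Ico k n, f j) * f n)
        = r k * (∏ j ∈ Ico k n, f j) * f n := by ring
      _ ≤ c ^ (n - k) * (r n * ∏ j ∈ Ico k n, g j) * f n :=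
          mul_le_mul_of_nonneg_right ih' (hf n hn)
      _ = c ^ (n - k) * (∏ j ∈ Ico k n, g j) * (r n * f n) := by ring
      _ ≤ c ^ (n - k) * (∏ j ∈ Ico k n, g j) * (c * (r (n + 1) * g n)) :=
          mul_le_mul_of_nonneg_left (h n hn) (by positivity)
      _ = _ := by ring

lemma le_mul_prod_Ico {r f g : ℕ → ℝ} {c : ℝ} (hc : 0 ≤ c) {k n : ℕ} (hkn : k ≤ n)
    (hf : ∀ j ∈ Ico k n, 0 ≤ f j) (hg : ∀ j ∈ Ico k n, 0 ≤ g j)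
    (h : ∀ j ∈ Ico k n, r (j + 1) * g j ≤ c * (r j * f j)) :
    r n * ∏ j ∈ Ico k n, g j ≤ c ^ (n - k) * (r k * ∏ j ∈ Ico k n, f j) := by
  induction n, hkn using Nat.le_induction with
  | base => simp
  | succ n hkn ih =>
    have hsub : ∀ j ∈ Ico k n, j ∈ Ico k (n + 1) := fun j hj => by
      simp only [mem_Ico] at hj ⊢; omega
    have hn : n ∈ Ico k (n + 1) := by simp only [mem_Ico]; omega
    have ih' := ih (fun j hj => hf j (hsub j hj)) (fun j hj => hg j (hsub j hj))
      (fun j hj => h j (hsub j hj))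
    have hG : 0 ≤ ∏ j ∈ Ico k n, g j := prod_nonneg fun j hj => hg j (hsub j hj)
    rw [prod_Ico_succ_top hkn, prod_Ico_succ_top hkn, Nat.sub_add_comm hkn, pow_succ]
    calc r (n + 1) * ((∏ j ∈ Ico k n, g j) * g n)
        = (r (n + 1) * g n) * (∏ j ∈ Ico k n, g j) := by ring
      _ ≤ (c * (r n * f n)) * (∏ j ∈ Ico k n, g j) := mul_le_mul_of_nonneg_right (h n hn) hG
      _ = c * f n * (r n * ∏ j ∈ Ico k n, g j) := by ring
      _ ≤ c * f n * (c ^ (n - k) * (r k * ∏ j ∈ Ico k n, f j)) :=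
          mul_le_mul_of_nonneg_left ih' (mul_nonneg hc (hf n hn))
      _ = _ := by ring

lemma ramp_mul_prod_sat_comparable {L X : ℕ → ℝ} (hL : Antitone L) (hX : Antitone X)
    {i n : ℕ} (hi : i < n) :
    (ramp (L i - L n) (X i - X (i + 1)) * ∏ j ∈ Ico (i + 1) n,
        sat ((X i - X j + ramp (L j - L n) (X j - X (j + 1))) * (L i - L j)) ≤
      4 ^ n * (ramp (L i - L n) (X i - X n) *
        ∏ j ∈ Ico (i + 1) n, sat ((X i - X j) * (L i - L j)))) ∧
    (ramp (L i - L n) (X i - X n) * ∏ j ∈ Ico (i + 1) n, sat ((X i - X j) * (L i - L j)) ≤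
      4 ^ n * (ramp (L i - L n) (X i - X (i + 1)) * ∏ j ∈ Ico (i + 1) n,
        sat ((X i - X j + ramp (L j - L n) (X j - X (j + 1))) * (L i - L j)))) := by
  have dX : ∀ {a b : ℕ}, a ≤ b → 0 ≤ X a - X b := fun h => sub_nonneg.2 (hX h)
  have dL : ∀ {a b : ℕ}, a ≤ b → 0 ≤ L a - L b := fun h => sub_nonneg.2 (hL h)
  have hf : ∀ j ∈ Ico (i + 1) n,
      0 ≤ sat ((X i - X j + ramp (L j - L n) (X j - X (j + 1))) * (L i - L j)) := by
    intro j hj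
    rw [mem_Ico] at hj
    exact sat_nonneg (mul_nonneg (add_nonneg (dX (by omega))
      (ramp_nonneg (dL (by omega)) (dX (by omega)))) (dL (by omega)))
  have hg : ∀ j ∈ Ico (i + 1) n, 0 ≤ sat ((X i - X j) * (L i - L j)) := by
    intro j hj
    rw [mem_Ico] at hj
    exact sat_nonneg (mul_nonneg (dX (by omega)) (dL (by omega)))
  have hpow : (4 : ℝ) ^ (n - (i + 1)) ≤ 4 ^ n := pow_le_pow_right₀ (by norm_num) (by omega)
  constructor
  · refine (mul_prod_Ico_le (r := fun k => ramp (L i - L n) (X i - X k)) (c := 4)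
      (by norm_num) hi hf hg fun j hj => ?_).trans (mul_le_mul_of_nonneg_right hpow
        (mul_nonneg (ramp_nonneg (dL hi.le) (dX hi.le)) (prod_nonneg hg)))
    rw [mem_Ico] at hj
    have := ramp_mul_sat_le (dX (a := i) (b := j) (by omega)) (dX (a := j) (b := j + 1) (by omega))
      (dL (a := i) (b := j) (by omega)) (dL (a := j) (b := n) (by omega))
    simpa only [sub_add_sub_cancel] using this
  · refine (le_mul_prod_Ico (r := fun k => ramp (L i - L n) (X i - X k)) (c := 4)
      (by norm_num) hi hf hg fun j hj => ?_).trans (mul_le_mul_of_nonneg_right hpow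
        (mul_nonneg (ramp_nonneg (dL hi.le) (dX (by omega))) (prod_nonneg hf)))
    rw [mem_Ico] at hj
    have := ramp_mul_sat_ge (dX (a := i) (b := j) (by omega)) (dX (a := j) (b := j + 1) (by omega))
      (dL (a := i) (b := j) (by omega)) (dL (a := j) (b := n) (by omega))
    simpa only [sub_add_sub_cancel] using this

lemma prod_Ioi_fin_eq_prod_Ico {n : ℕ} (i : Fin n) (F : ℕ → ℝ) :
    ∏ j ∈ Ioi i, F j = ∏ j ∈ Ico ((i : ℕ) + 1) n, F j := by
  have h : Ico ((i : ℕ) + 1) n = (Ioi i).map Fin.valEmbedding := by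
    rw [Fin.map_valEmbedding_Ioi]; ext; simp
  rw [h, prod_map]
  rfl

/-- The length scale on which the `k`-th variable of `Iint` lives below `x k`. -/
noncomputable def scale {n : ℕ} (lam x : Fin (n + 1) → ℝ) (k : Fin n) : ℝ :=
  ramp (lam k.castSucc - lam (Fin.last n)) (x k.castSucc - x k.succ)

/-- The size of `Iint` read off from the length scales of the variables. -/
noncomputable def scaleBound (n : ℕ) (lam x : Fin (n + 1) → ℝ) : ℝ :=
  ∏ i : Fin n, (scale lam x i * ∏ j ∈ Ioi i,
    sat ((x i.castSucc - x j.castSucc + scale lam x j) * (lam i.castSucc - lam j.castSucc)))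

/-- The closed form to which `Iint` is comparable. -/
noncomputable def closedForm (n : ℕ) (lam x : Fin (n + 1) → ℝ) : ℝ :=
  ∏ i : Fin n, (ramp (lam i.castSucc - lam (Fin.last n)) (x i.castSucc - x (Fin.last n)) *
    ∏ j ∈ Ioi i, sat ((x i.castSucc - x j.castSucc) * (lam i.castSucc - lam j.castSucc)))

section Antitone

variable {n : ℕ} {lam x : Fin (n + 1) → ℝ}

lemma scale_nonneg (hl : Antitone lam) (hx : Antitone x) (k : Fin n) : 0 ≤ scale lam x k :=
  ramp_nonneg (sub_nonneg.2 (hl (Fin.le_last _))) (sub_nonneg.2 (hx k.castSucc_le_succ))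

lemma sat_add_scale_nonneg (hl : Antitone lam) (hx : Antitone x) {i j : Fin n} (hij : i < j) :
    0 ≤ sat ((x i.castSucc - x j.castSucc + scale lam x j) *
      (lam i.castSucc - lam j.castSucc)) :=
  sat_nonneg (mul_nonneg (add_nonneg (sub_nonneg.2 (hx (Fin.castSucc_le_castSucc_iff.2 hij.le)))
    (scale_nonneg hl hx j)) (sub_nonneg.2 (hl (Fin.castSucc_le_castSucc_iff.2 hij.le))))

lemma sat_sub_nonneg (hl : Antitone lam) (hx : Antitone x) {i j : Fin (n + 1)} (hij : i ≤ j) :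
    0 ≤ sat ((x i - x j) * (lam i - lam j)) :=
  sat_nonneg (mul_nonneg (sub_nonneg.2 (hx hij)) (sub_nonneg.2 (hl hij)))

lemma closedForm_nonneg (hl : Antitone lam) (hx : Antitone x) : 0 ≤ closedForm n lam x :=
  prod_nonneg fun _ _ => mul_nonneg
    (ramp_nonneg (sub_nonneg.2 (hl (Fin.le_last _))) (sub_nonneg.2 (hx (Fin.le_last _))))
    (prod_nonneg fun _ hj => sat_sub_nonneg hl hx
      (Fin.castSucc_le_castSucc_iff.2 (mem_Ioi.1 hj).le))

lemma scaleBound_comparable_closedForm (hl : Antitone lam) (hx : Antitone x) :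
    scaleBound n lam x ≤ (4 ^ n) ^ n * closedForm n lam x ∧
      closedForm n lam x ≤ (4 ^ n) ^ n * scaleBound n lam x := by
  have hmono : Monotone fun k : ℕ => (⟨min k n, by omega⟩ : Fin (n + 1)) := fun a b hab => by
    simp only [Fin.mk_le_mk]; omega
  set L : ℕ → ℝ := fun k => lam ⟨min k n, by omega⟩ with hLdef
  set X : ℕ → ℝ := fun k => x ⟨min k n, by omega⟩ with hXdef
  have hL : Antitone L := hl.comp_monotone hmono
  have hX : Antitone X := hx.comp_monotone hmono
  have eL : ∀ k : Fin (n + 1), lam k = L k := fun k => by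
    simp only [hLdef]; congr; ext; simp; omega
  have eX : ∀ k : Fin (n + 1), x k = X k := fun k => by
    simp only [hXdef]; congr; ext; simp; omega
  have key := fun i : Fin n => ramp_mul_prod_sat_comparable hL hX i.2
  have e1 : ∀ i : Fin n, scale lam x i * ∏ j ∈ Ioi i,
      sat ((x i.castSucc - x j.castSucc + scale lam x j) * (lam i.castSucc - lam j.castSucc)) =
      ramp (L i - L n) (X i - X (i + 1)) * ∏ j ∈ Ico ((i : ℕ) + 1) n,
        sat ((X i - X j + ramp (L j - L n) (X j - X (j + 1))) * (L i - L j)) := fun i => by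
    rw [← prod_Ioi_fin_eq_prod_Ico i
      fun j => sat ((X i - X j + ramp (L j - L n) (X j - X (j + 1))) * (L i - L j))]
    simp only [scale, eL, eX, Fin.val_castSucc, Fin.val_succ, Fin.val_last]
  have e2 : ∀ i : Fin n,
      ramp (lam i.castSucc - lam (Fin.last n)) (x i.castSucc - x (Fin.last n)) *
        ∏ j ∈ Ioi i, sat ((x i.castSucc - x j.castSucc) * (lam i.castSucc - lam j.castSucc)) =
      ramp (L i - L n) (X i - X n) *
        ∏ j ∈ Ico ((i : ℕ) + 1) n, sat ((X i - X j) * (L i - L j)) := fun i => by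
    rw [← prod_Ioi_fin_eq_prod_Ico i fun j => sat ((X i - X j) * (L i - L j))]
    simp only [eL, eX, Fin.val_castSucc, Fin.val_last]
  have hconst : ∀ f : Fin n → ℝ, (4 ^ n) ^ n * ∏ i, f i = ∏ i, 4 ^ n * f i := fun f => by
    rw [prod_mul_distrib, prod_const, card_univ, Fintype.card_fin]
  unfold scaleBound closedForm
  rw [hconst, hconst]
  refine ⟨prod_le_prod (fun i _ => ?_) fun i _ => ?_, prod_le_prod (fun i _ => ?_) fun i _ => ?_⟩
  · exact mul_nonneg (scale_nonneg hl hx i)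
      (prod_nonneg fun j hj => sat_add_scale_nonneg hl hx (mem_Ioi.1 hj))
  · rw [e1, e2]; exact (key i).1
  · exact mul_nonneg
      (ramp_nonneg (sub_nonneg.2 (hl (Fin.le_last _))) (sub_nonneg.2 (hx (Fin.le_last _))))
      (prod_nonneg fun j hj => sat_sub_nonneg hl hx
        (Fin.castSucc_le_castSucc_iff.2 (mem_Ioi.1 hj).le))
  · rw [e1, e2]; exact (key i).2

/-- The integrand of `Iint`. -/
noncomputable def integrand {n : ℕ} (lam x : Fin (n + 1) → ℝ) (y : Fin n → ℝ) : ℝ :=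
  Real.exp (-∑ k : Fin n, (lam k.castSucc - lam (Fin.last n)) * (x k.castSucc - y k)) *
    ∏ i : Fin n, ∏ j ∈ Ioi i, sat ((y i - y j) * (lam i.castSucc - lam j.castSucc))

lemma Iint_eq_integral_integrand (n : ℕ) (lam x : Fin (n + 1) → ℝ) :
    Iint n lam x = ∫ y in Set.Icc (fun k : Fin n => x k.succ) (fun k : Fin n => x k.castSucc),
      integrand lam x y := rfl

lemma le_of_mem_Icc_of_lt (hx : Antitone x) {y : Fin n → ℝ}
    (hy : y ∈ Set.Icc (fun k : Fin n => x k.succ) (fun k : Fin n => x k.castSucc))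
    {i j : Fin n} (hij : i < j) : y j ≤ y i :=
  (hy.2 j).trans ((hx (Fin.succ_le_castSucc_iff.2 hij)).trans (hy.1 i))

lemma mul_sub_nonneg_of_mem_Icc (hl : Antitone lam) (hx : Antitone x) {y : Fin n → ℝ}
    (hy : y ∈ Set.Icc (fun k : Fin n => x k.succ) (fun k : Fin n => x k.castSucc))
    {i j : Fin n} (hij : i < j) : 0 ≤ (y i - y j) * (lam i.castSucc - lam j.castSucc) :=
  mul_nonneg (sub_nonneg.2 (le_of_mem_Icc_of_lt hx hy hij))
    (sub_nonneg.2 (hl (Fin.castSucc_le_castSucc_iff.2 hij.le)))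

lemma integrand_nonneg (hl : Antitone lam) (hx : Antitone x) {y : Fin n → ℝ}
    (hy : y ∈ Set.Icc (fun k : Fin n => x k.succ) (fun k : Fin n => x k.castSucc)) :
    0 ≤ integrand lam x y :=
  mul_nonneg (Real.exp_nonneg _) (prod_nonneg fun _ _ => prod_nonneg fun _ hj =>
    sat_nonneg (mul_sub_nonneg_of_mem_Icc hl hx hy (mem_Ioi.1 hj)))

lemma integrableOn_integrand (hl : Antitone lam) (hx : Antitone x) :
    IntegrableOn (integrand lam x)
      (Set.Icc (fun k : Fin n => x k.succ) (fun k : Fin n => x k.castSucc)) := by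
  refine ContinuousOn.integrableOn_compact isCompact_Icc ?_
  unfold integrand sat
  refine ContinuousOn.mul (by fun_prop) (continuousOn_finsetProd _ fun i _ =>
    continuousOn_finsetProd _ fun j hj => ContinuousOn.div (by fun_prop) (by fun_prop) ?_)
  intro y hy
  have := mul_sub_nonneg_of_mem_Icc hl hx hy (mem_Ioi.1 hj)
  positivity

lemma Iint_nonneg (hl : Antitone lam) (hx : Antitone x) : 0 ≤ Iint n lam x :=
  setIntegral_nonneg measurableSet_Icc fun _ hy => integrand_nonneg hl hx hy

lemma scaleBound_eq_prod_mul_prod :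
    scaleBound n lam x = (∏ i, scale lam x i) * ∏ i : Fin n, ∏ j ∈ Ioi i,
      sat ((x i.castSucc - x j.castSucc + scale lam x j) *
        (lam i.castSucc - lam j.castSucc)) := by
  rw [scaleBound, prod_mul_distrib]

lemma scale_le (hl : Antitone lam) (hx : Antitone x) (k : Fin n) :
    scale lam x k ≤ x k.castSucc - x k.succ :=
  ramp_le (sub_nonneg.2 (hl (Fin.le_last _))) (sub_nonneg.2 (hx k.castSucc_le_succ))

lemma mul_scaleBound_le_Iint (hl : Antitone lam) (hx : Antitone x) :
    (Real.exp (-n) * ∏ i : Fin n, ∏ _j ∈ Ioi i, (1 / 3 : ℝ)) * (1 / 3) ^ n *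
      scaleBound n lam x ≤ Iint n lam x := by
  set lo : Fin n → ℝ := fun k => x k.castSucc - 2 / 3 * scale lam x k with hlo
  set hi : Fin n → ℝ := fun k => x k.castSucc - 1 / 3 * scale lam x k with hhi
  have hs := scale_nonneg hl hx
  have hsub : Set.Icc lo hi ⊆
      Set.Icc (fun k : Fin n => x k.succ) (fun k : Fin n => x k.castSucc) := by
    refine Set.Icc_subset_Icc (fun k => ?_) (fun k => ?_)
    · have := scale_le hl hx k; have := hs k; simp only [hlo]; linarith
    · have := hs k; simp only [hhi]; linarith
  have hint := integrableOn_integrand hl hx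
  rw [Iint_eq_integral_integrand]
  refine le_trans ?_ (setIntegral_mono_set hint
    ((ae_restrict_iff' measurableSet_Icc).2 (ae_of_all _ fun y hy => integrand_nonneg hl hx hy))
    hsub.eventuallyLE)
  have hbound : ∀ y ∈ Set.Icc lo hi, (Real.exp (-n) * ∏ i : Fin n, ∏ _j ∈ Ioi i, (1 / 3 : ℝ)) *
      (∏ i : Fin n, ∏ j ∈ Ioi i, sat ((x i.castSucc - x j.castSucc + scale lam x j) *
        (lam i.castSucc - lam j.castSucc))) ≤ integrand lam x y := by
    intro y hy
    rw [mul_assoc]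
    refine mul_le_mul (Real.exp_le_exp.2 (neg_le_neg ?_)) ?_ (mul_nonneg (by positivity)
      (prod_nonneg fun _ _ => prod_nonneg fun _ hj =>
        sat_add_scale_nonneg hl hx (mem_Ioi.1 hj))) (Real.exp_nonneg _)
    · calc ∑ k : Fin n, (lam k.castSucc - lam (Fin.last n)) * (x k.castSucc - y k)
          ≤ ∑ _k : Fin n, (1 : ℝ) := by
            refine sum_le_sum fun k _ => ?_
            have hμ : 0 ≤ lam k.castSucc - lam (Fin.last n) := sub_nonneg.2 (hl (Fin.le_last _))
            refine le_trans (mul_le_mul_of_nonneg_left ?_ hμ)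
              (mul_ramp_le_one hμ (sub_nonneg.2 (hx k.castSucc_le_succ)))
            have h1 : x k.castSucc - 2 / 3 * scale lam x k ≤ y k := hy.1 k
            have h2 := hs k
            change _ ≤ scale lam x k
            linarith
        _ = n := by simp
    · simp only [← prod_mul_distrib]
      refine prod_le_prod (fun i _ => prod_nonneg fun j hj => mul_nonneg (by norm_num)
        (sat_add_scale_nonneg hl hx (mem_Ioi.1 hj))) fun i _ => prod_le_prod
        (fun j hj => mul_nonneg (by norm_num) (sat_add_scale_nonneg hl hx (mem_Ioi.1 hj)))
        fun j hj => ?_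
      have hij := mem_Ioi.1 hj
      have hμ : 0 ≤ lam i.castSucc - lam j.castSucc :=
        sub_nonneg.2 (hl (Fin.castSucc_le_castSucc_iff.2 hij.le))
      have hy0 := mul_sub_nonneg_of_mem_Icc hl hx (hsub hy) hij
      have h1 : x i.castSucc - 2 / 3 * scale lam x i ≤ y i := hy.1 i
      have h2 : y j ≤ x j.castSucc - 1 / 3 * scale lam x j := hy.2 j
      have h3 := scale_le hl hx i
      have h4 : x j.castSucc ≤ x i.succ := hx (Fin.succ_le_castSucc_iff.2 hij)
      have h5 : x i.castSucc - x j.castSucc + scale lam x j ≤ 3 * (y i - y j) := by linarith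
      have h6 : sat ((x i.castSucc - x j.castSucc + scale lam x j) *
          (lam i.castSucc - lam j.castSucc)) ≤
          3 * sat ((y i - y j) * (lam i.castSucc - lam j.castSucc)) := by
        refine (sat_mono (mul_nonneg ?_ hμ) ?_).trans (sat_mul_le (by norm_num) hy0)
        · have := hs j
          have := hx (Fin.castSucc_le_castSucc_iff.2 hij.le)
          linarith
        · rw [← mul_assoc]
          exact mul_le_mul_of_nonneg_right h5 hμ
      linarith
  have hle : lo ≤ hi := fun k => by have := hs k; simp only [hlo, hhi]; linarith
  have hvol : (volume : Measure (Fin n → ℝ)).real (Set.Icc lo hi) =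
      (1 / 3) ^ n * ∏ i, scale lam x i := by
    rw [measureReal_def, Real.volume_Icc_pi_toReal hle]
    have : ∀ i, hi i - lo i = 1 / 3 * scale lam x i := fun i => by simp only [hlo, hhi]; ring
    simp only [this, prod_mul_distrib, prod_const, card_univ, Fintype.card_fin]
  refine le_trans (le_of_eq ?_) (setIntegral_ge_of_const_le_real measurableSet_Icc
    isCompact_Icc.measure_lt_top.ne hbound (hint.mono_set hsub))
  rw [hvol, scaleBound_eq_prod_mul_prod]
  ring

lemma one_add_pow_mul_exp_neg_le (N : ℕ) {u : ℝ} (hu : 0 ≤ u) :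
    (1 + u) ^ N * Real.exp (-u) ≤ Real.exp 1 * (N + 2).factorial * ((1 + u) ^ 2)⁻¹ := by
  have h := Real.pow_div_factorial_le_exp (1 + u) (by positivity) (N + 2)
  rw [div_le_iff₀ (by positivity), Real.exp_add, pow_add] at h
  rw [Real.exp_neg, ← div_eq_mul_inv, ← div_eq_mul_inv,
    div_le_div_iff₀ (by positivity) (by positivity)]
  linarith

lemma integral_inv_one_add_mul_sq {μ a b : ℝ} (hμ : 0 ≤ μ) (hab : a ≤ b) :
    ∫ y in Set.Icc a b, ((1 + μ * (b - y)) ^ 2)⁻¹ = ramp μ (b - a) := by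
  have hpos : ∀ y ∈ Set.uIcc a b, 0 < 1 + μ * (b - y) := fun y hy => by
    rw [Set.uIcc_of_le hab] at hy
    have := mul_nonneg hμ (sub_nonneg.2 hy.2)
    linarith
  rw [integral_Icc_eq_integral_Ioc, ← intervalIntegral.integral_of_le hab,
    intervalIntegral.integral_eq_sub_of_hasDerivAt (f := fun y => -ramp μ (b - y))]
  · simp [ramp]
  · intro y hy
    have h0 := (hpos y hy).ne'
    have h1 : HasDerivAt (fun y => b - y) (-1) y := by
      simpa using (hasDerivAt_id y).const_sub b
    have h2 : HasDerivAt (fun y => 1 + μ * (b - y)) (μ * -1) y := (h1.const_mul μ).const_add 1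
    refine (h1.div h2 h0).neg.congr_deriv ?_
    field_simp
    ring
  · refine ContinuousOn.intervalIntegrable (ContinuousOn.inv₀ (by fun_prop) fun y hy => ?_)
    exact pow_ne_zero _ (hpos y hy).ne'

lemma Iint_le_mul_scaleBound (hl : Antitone lam) (hx : Antitone x) :
    Iint n lam x ≤ (Real.exp 1 * (n + 2).factorial) ^ n * scaleBound n lam x := by
  set K : ℝ := Real.exp 1 * (n + 2).factorial with hK
  have hK0 : 0 ≤ K := by positivity
  set A : ℝ := ∏ i : Fin n, ∏ j ∈ Ioi i,
    sat ((x i.castSucc - x j.castSucc + scale lam x j) * (lam i.castSucc - lam j.castSucc))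
  have hA : 0 ≤ A := prod_nonneg fun _ _ => prod_nonneg fun _ hj =>
    sat_add_scale_nonneg hl hx (mem_Ioi.1 hj)
  have hμ : ∀ k : Fin n, 0 ≤ lam k.castSucc - lam (Fin.last n) := fun k =>
    sub_nonneg.2 (hl (Fin.le_last _))
  set g : Fin n → ℝ → ℝ := fun k t =>
    ((1 + (lam k.castSucc - lam (Fin.last n)) * (x k.castSucc - t)) ^ 2)⁻¹ with hg
  have hu : ∀ y ∈ Set.Icc (fun k : Fin n => x k.succ) (fun k : Fin n => x k.castSucc), ∀ k,
      0 ≤ (lam k.castSucc - lam (Fin.last n)) * (x k.castSucc - y k) := fun y hy k =>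
    mul_nonneg (hμ k) (sub_nonneg.2 (hy.2 k))
  have hbound : ∀ y ∈ Set.Icc (fun k : Fin n => x k.succ) (fun k : Fin n => x k.castSucc),
      integrand lam x y ≤ K ^ n * A * ∏ k, g k (y k) := by
    intro y hy
    set u : Fin n → ℝ := fun k => (lam k.castSucc - lam (Fin.last n)) * (x k.castSucc - y k)
    have hu' : ∀ k, 0 ≤ u k := hu y hy
    have hpairs : ∏ i : Fin n, ∏ j ∈ Ioi i,
        sat ((y i - y j) * (lam i.castSucc - lam j.castSucc)) ≤ A * ∏ k, (1 + u k) ^ n := by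
      calc ∏ i : Fin n, ∏ j ∈ Ioi i, sat ((y i - y j) * (lam i.castSucc - lam j.castSucc))
          ≤ ∏ i : Fin n, ∏ j ∈ Ioi i, (sat ((x i.castSucc - x j.castSucc + scale lam x j) *
              (lam i.castSucc - lam j.castSucc)) * (1 + u j)) := by
            refine prod_le_prod (fun i _ => prod_nonneg fun j hj =>
              sat_nonneg (mul_sub_nonneg_of_mem_Icc hl hx hy (mem_Ioi.1 hj))) fun i _ =>
              prod_le_prod (fun j hj =>
                sat_nonneg (mul_sub_nonneg_of_mem_Icc hl hx hy (mem_Ioi.1 hj))) fun j hj => ?_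
            have hij := mem_Ioi.1 hj
            have hl' : 0 ≤ lam i.castSucc - lam j.castSucc :=
              sub_nonneg.2 (hl (Fin.castSucc_le_castSucc_iff.2 hij.le))
            have hx' : 0 ≤ x i.castSucc - x j.castSucc :=
              sub_nonneg.2 (hx (Fin.castSucc_le_castSucc_iff.2 hij.le))
            have h1 : x j.castSucc - y j ≤ scale lam x j * (1 + u j) :=
              le_ramp_mul (hμ j) (sub_nonneg.2 (hy.2 j)) (sub_le_sub_left (hy.1 j) _)
            have h2 : y i ≤ x i.castSucc := hy.2 i
            have h3 : y i - y j ≤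
                (1 + u j) * (x i.castSucc - x j.castSucc + scale lam x j) := by
              nlinarith [mul_nonneg (hu' j) hx']
            rw [mul_comm (sat _)]
            refine (sat_mono (mul_sub_nonneg_of_mem_Icc hl hx hy hij) ?_).trans
              (sat_mul_le (by linarith [hu' j])
                (mul_nonneg (add_nonneg hx' (scale_nonneg hl hx j)) hl'))
            rw [← mul_assoc]
            exact mul_le_mul_of_nonneg_right h3 hl'
        _ = A * ∏ i : Fin n, ∏ j ∈ Ioi i, (1 + u j) := by simp only [prod_mul_distrib, A]
        _ = A * ∏ j : Fin n, ∏ _i ∈ Iio j, (1 + u j) := by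
            congr 1
            exact prod_comm' fun i j => by simp
        _ ≤ A * ∏ k, (1 + u k) ^ n := by
            refine mul_le_mul_of_nonneg_left (prod_le_prod (fun k _ => prod_nonneg fun _ _ => ?_)
              fun k _ => ?_) hA
            · linarith [hu' k]
            · rw [prod_const]
              exact pow_le_pow_right₀ (by linarith [hu' k]) (by simp)
    have hexp : Real.exp (-∑ k, u k) = ∏ k, Real.exp (-u k) := by
      rw [← sum_neg_distrib, Real.exp_sum]
    calc integrand lam x y
        ≤ Real.exp (-∑ k, u k) * (A * ∏ k, (1 + u k) ^ n) :=
          mul_le_mul_of_nonneg_left hpairs (Real.exp_nonneg _)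
      _ = A * ∏ k, ((1 + u k) ^ n * Real.exp (-u k)) := by
          rw [hexp, prod_mul_distrib]; ring
      _ ≤ A * ∏ k, (K * g k (y k)) :=
          mul_le_mul_of_nonneg_left (prod_le_prod (fun k _ => mul_nonneg
            (pow_nonneg (by linarith [hu' k]) _) (Real.exp_nonneg _))
            fun k _ => one_add_pow_mul_exp_neg_le n (hu' k)) hA
      _ = _ := by
          rw [prod_mul_distrib, prod_const, card_univ, Fintype.card_fin]; ring
  have hgint : IntegrableOn (fun y : Fin n → ℝ => K ^ n * A * ∏ k, g k (y k))
      (Set.Icc (fun k : Fin n => x k.succ) (fun k : Fin n => x k.castSucc)) := by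
    refine ContinuousOn.integrableOn_compact isCompact_Icc (continuousOn_const.mul
      (continuousOn_finsetProd _ fun k _ => ContinuousOn.inv₀ (by fun_prop) fun y hy => ?_))
    have := hu y hy k
    positivity
  calc Iint n lam x
      ≤ ∫ y in Set.Icc (fun k : Fin n => x k.succ) (fun k : Fin n => x k.castSucc),
          K ^ n * A * ∏ k, g k (y k) :=
        setIntegral_mono_on (integrableOn_integrand hl hx) hgint measurableSet_Icc hbound
    _ = K ^ n * A * ∏ k : Fin n, ∫ t in Set.Icc (x k.succ) (x k.castSucc), g k t := by
        rw [integral_const_mul, ← Set.pi_univ_Icc, volume_pi, Measure.restrict_pi_pi,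
          integral_fintype_prod_eq_prod]
    _ = K ^ n * A * ∏ k, scale lam x k := by
        congr 1
        exact prod_congr rfl fun k _ =>
          integral_inv_one_add_mul_sq (hμ k) (hx k.castSucc_le_succ)
    _ = K ^ n * scaleBound n lam x := by rw [scaleBound_eq_prod_mul_prod]; ring

end Antitone

/-- `Iint` is comparable with its closed form, with constants depending only on the dimension. -/
lemma exists_Iint_comparable_closedForm (n : ℕ) :
    ∃ c C : ℝ, 0 < c ∧ 0 < C ∧ ∀ lam x : Fin (n + 1) → ℝ, Antitone lam → Antitone x →
      c * closedForm n lam x ≤ Iint n lam x ∧ Iint n lam x ≤ C * closedForm n lam x := by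
  set c₀ : ℝ := (Real.exp (-n) * ∏ i : Fin n, ∏ _j ∈ Ioi i, (1 / 3 : ℝ)) * (1 / 3) ^ n with hc₀
  have hc : 0 < c₀ := mul_pos (mul_pos (Real.exp_pos _) (prod_pos fun _ _ => prod_pos fun _ _ => by
    norm_num)) (by positivity)
  refine ⟨c₀ / (4 ^ n) ^ n, (Real.exp 1 * (n + 2).factorial) ^ n * (4 ^ n) ^ n, by positivity,
    by positivity, fun lam x hl hx => ?_⟩
  obtain ⟨h1, h2⟩ := scaleBound_comparable_closedForm hl hx
  constructor
  · refine le_trans ?_ (mul_scaleBound_le_Iint hl hx)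
    rw [div_mul_eq_mul_div, div_le_iff₀ (by positivity)]
    calc c₀ * closedForm n lam x ≤ c₀ * ((4 ^ n) ^ n * scaleBound n lam x) := by gcongr
      _ = c₀ * scaleBound n lam x * (4 ^ n) ^ n := by ring
  · refine (Iint_le_mul_scaleBound hl hx).trans ?_
    rw [mul_assoc]
    gcongr

/-- Dropping the next-to-last entry of `lam`, as in the first factor of the recursion. -/
noncomputable def dropPenultimate {m : ℕ} (lam : Fin (m + 3) → ℝ) : Fin (m + 2) → ℝ :=
  fun k => if (k : ℕ) < m + 1 then lam k.castSucc else lam (Fin.last (m + 2))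

/-- Dropping the first and the next-to-last entry of `lam`. -/
noncomputable def dropFirstPenultimate {m : ℕ} (lam : Fin (m + 3) → ℝ) : Fin (m + 1) → ℝ :=
  fun k => if (k : ℕ) < m then lam k.succ.castSucc else lam (Fin.last (m + 2))

section Drop

variable {m : ℕ} {lam : Fin (m + 3) → ℝ}

lemma dropPenultimate_castSucc (k : Fin (m + 1)) :
    dropPenultimate lam k.castSucc = lam k.castSucc.castSucc := if_pos k.2

lemma dropPenultimate_last :
    dropPenultimate lam (Fin.last (m + 1)) = lam (Fin.last (m + 2)) := if_neg (by simp)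

lemma antitone_dropPenultimate (hl : Antitone lam) : Antitone (dropPenultimate lam) := by
  intro i j hij
  rw [Fin.le_def] at hij
  unfold dropPenultimate
  split_ifs with h1 h2 h2
  · exact hl hij
  · omega
  · exact hl (Fin.le_last _)
  · exact le_rfl

lemma antitone_dropFirstPenultimate (hl : Antitone lam) :
    Antitone (dropFirstPenultimate lam) := by
  intro i j hij
  rw [Fin.le_def] at hij
  unfold dropFirstPenultimate
  split_ifs with h1 h2 h2
  · exact hl (Fin.castSucc_le_castSucc_iff.2 (Fin.succ_le_succ_iff.2 hij))
  · omega
  · exact hl (Fin.le_last _)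
  · exact le_rfl

end Drop

lemma prod_prod_Ioi_succ {n : ℕ} (S : Fin (n + 1) → Fin (n + 1) → ℝ) :
    ∏ i, ∏ j ∈ Ioi i, S i j =
      (∏ j : Fin n, S 0 j.succ) * ∏ i : Fin n, ∏ j ∈ Ioi i, S i.succ j.succ := by
  rw [Fin.prod_univ_succ, Fin.prod_Ioi_zero]
  simp only [Fin.prod_Ioi_succ]

/-- Splitting off the first variable of the closed form. -/
lemma closedForm_succ (n : ℕ) (lam x : Fin (n + 2) → ℝ) :
    closedForm (n + 1) lam x =
      ramp (lam 0 - lam (Fin.last (n + 1))) (x 0 - x (Fin.last (n + 1))) *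
        (∏ j : Fin n, sat ((x 0 - x j.succ.castSucc) * (lam 0 - lam j.succ.castSucc))) *
        closedForm n (fun k => lam k.succ) (fun k => x k.succ) := by
  unfold closedForm
  rw [prod_mul_distrib, prod_mul_distrib, Fin.prod_univ_succ, prod_prod_Ioi_succ]
  simp only [Fin.castSucc_zero, Fin.castSucc_succ, Fin.succ_last]
  ring

/-- Recursive estimate (here `n = m + 1 ≥ 1`, vectors in `ℝ^{n+2} = ℝ^{m+3}`): for weakly
decreasing `λ, x` with `x_1 − x_2 ≥ x_{n+1} − x_{n+2}`,
`I⁽ⁿ⁺¹⁾(λ;x) · I⁽ⁿ⁻¹⁾(λ_2,…,λ_n,λ_{n+2}; x_2,…,x_{n+1})` is comparable with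
`I⁽ⁿ⁾(λ_1,…,λ_n,λ_{n+2}; x_1,…,x_{n+1}) · [(x_1−x_{n+1})(λ_1−λ_{n+1})/(1+(x_1−x_{n+1})(λ_1−λ_{n+1}))]
  · I⁽ⁿ⁾(λ_2,…,λ_{n+1},λ_{n+2}; x_2,…,x_{n+2})`, with constants depending only on `n`. -/
theorem recursive_estimate (m : ℕ) :
    ∃ C₁ C₂ : ℝ, 0 < C₁ ∧ 0 < C₂ ∧
      ∀ lam x : Fin (m + 3) → ℝ, Antitone lam → Antitone x →
        x 0 - x 1 ≥ x ⟨m + 1, by omega⟩ - x ⟨m + 2, by omega⟩ →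
        (C₁ * (Iint (m + 1)
                (fun k : Fin (m + 2) =>
                  if (k : ℕ) < m + 1 then lam k.castSucc else lam (Fin.last (m + 2)))
                (fun k : Fin (m + 2) => x k.castSucc) *
              ((x 0 - x ⟨m + 1, by omega⟩) * (lam 0 - lam ⟨m + 1, by omega⟩) /
                (1 + (x 0 - x ⟨m + 1, by omega⟩) * (lam 0 - lam ⟨m + 1, by omega⟩))) *
              Iint (m + 1)
                (fun k : Fin (m + 2) => lam k.succ)
                (fun k : Fin (m + 2) => x k.succ)) ≤
            Iint (m + 2) lam x *
              Iint m
                (fun k : Fin (m + 1) =>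
                  if (k : ℕ) < m then lam k.succ.castSucc else lam (Fin.last (m + 2)))
                (fun k : Fin (m + 1) => x k.succ.castSucc)) ∧
        (Iint (m + 2) lam x *
              Iint m
                (fun k : Fin (m + 1) =>
                  if (k : ℕ) < m then lam k.succ.castSucc else lam (Fin.last (m + 2)))
                (fun k : Fin (m + 1) => x k.succ.castSucc) ≤
          C₂ * (Iint (m + 1)
                (fun k : Fin (m + 2) =>
                  if (k : ℕ) < m + 1 then lam k.castSucc else lam (Fin.last (m + 2)))
                (fun k : Fin (m + 2) => x k.castSucc) *
              ((x 0 - x ⟨m + 1, by omega⟩) * (lam 0 - lam ⟨m + 1, by omega⟩) /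
                (1 + (x 0 - x ⟨m + 1, by omega⟩) * (lam 0 - lam ⟨m + 1, by omega⟩))) *
              Iint (m + 1)
                (fun k : Fin (m + 2) => lam k.succ)
                (fun k : Fin (m + 2) => x k.succ))) := by
  obtain ⟨c₂, D₂, hc₂, hD₂, h₂⟩ := exists_Iint_comparable_closedForm (m + 2)
  obtain ⟨c₁, D₁, hc₁, hD₁, h₁⟩ := exists_Iint_comparable_closedForm (m + 1)
  obtain ⟨c₀, D₀, hc₀, hD₀, h₀⟩ := exists_Iint_comparable_closedForm m
  refine ⟨c₂ * c₀ / (D₁ * D₁), D₂ * D₀ * 2 / (c₁ * c₁), by positivity, by positivity,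
    fun lam x hl hx hgap => ?_⟩
  have hls : Antitone fun k : Fin (m + 2) => lam k.succ :=
    hl.comp_monotone (Fin.strictMono_succ).monotone
  have hxs : Antitone fun k : Fin (m + 2) => x k.succ :=
    hx.comp_monotone (Fin.strictMono_succ).monotone
  have hxc : Antitone fun k : Fin (m + 2) => x k.castSucc :=
    hx.comp_monotone (Fin.strictMono_castSucc).monotone
  have hxsc : Antitone fun k : Fin (m + 1) => x k.succ.castSucc :=
    hxc.comp_monotone (Fin.strictMono_succ).monotone
  have hlp := antitone_dropPenultimate hl
  have hlfp := antitone_dropFirstPenultimate hl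
  change (_ * (Iint (m + 1) (dropPenultimate lam) (fun k => x k.castSucc) *
      sat ((x 0 - x (Fin.last (m + 1)).castSucc) * (lam 0 - lam (Fin.last (m + 1)).castSucc)) *
      Iint (m + 1) (fun k => lam k.succ) (fun k => x k.succ)) ≤
      Iint (m + 2) lam x * Iint m (dropFirstPenultimate lam) (fun k => x k.succ.castSucc)) ∧
    (Iint (m + 2) lam x * Iint m (dropFirstPenultimate lam) (fun k => x k.succ.castSucc) ≤
      _ * (Iint (m + 1) (dropPenultimate lam) (fun k => x k.castSucc) *
      sat ((x 0 - x (Fin.last (m + 1)).castSucc) * (lam 0 - lam (Fin.last (m + 1)).castSucc)) *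
      Iint (m + 1) (fun k => lam k.succ) (fun k => x k.succ)))
  obtain ⟨l₂, u₂⟩ := h₂ lam x hl hx
  obtain ⟨lp, up⟩ := h₁ _ _ hlp hxc
  obtain ⟨ls, us⟩ := h₁ _ _ hls hxs
  obtain ⟨l₀, u₀⟩ := h₀ _ _ hlfp hxsc
  have nI₂ := Iint_nonneg hl hx
  have nIp := Iint_nonneg hlp hxc
  have nIs := Iint_nonneg hls hxs
  have nI₀ := Iint_nonneg hlfp hxsc
  have nG₂ := closedForm_nonneg hl hx
  have nGp := closedForm_nonneg hlp hxc
  have nGs := closedForm_nonneg hls hxs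
  have nG₀ := closedForm_nonneg hlfp hxsc
  have nS : 0 ≤ sat ((x 0 - x (Fin.last (m + 1)).castSucc) *
      (lam 0 - lam (Fin.last (m + 1)).castSucc)) := sat_sub_nonneg hl hx (Fin.zero_le _)
  have hμ : 0 ≤ lam 0 - lam (Fin.last (m + 2)) := sub_nonneg.2 (hl (Fin.le_last _))
  have hb : 0 ≤ x 0 - x (Fin.last (m + 1)).castSucc := sub_nonneg.2 (hx (Fin.zero_le _))
  have hG₂ := closedForm_succ (m + 1) lam x
  have hGp := closedForm_succ m (dropPenultimate lam) (fun k => x k.castSucc)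
  have htail : (fun k : Fin (m + 1) => dropPenultimate lam k.succ) = dropFirstPenultimate lam := by
    funext k
    simp only [dropPenultimate, dropFirstPenultimate, Fin.val_succ, Nat.add_lt_add_iff_right]
  have hzero : dropPenultimate lam 0 = lam 0 := dropPenultimate_castSucc 0
  rw [htail, dropPenultimate_last, hzero] at hGp
  simp only [dropPenultimate_castSucc, Fin.castSucc_zero] at hGp
  rw [Fin.prod_univ_castSucc, Fin.succ_last] at hG₂
  simp only [Fin.succ_castSucc] at hG₂
  have nprod : 0 ≤ ∏ j : Fin m, sat ((x 0 - x j.succ.castSucc.castSucc) *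
      (lam 0 - lam j.succ.castSucc.castSucc)) :=
    prod_nonneg fun _ _ => sat_sub_nonneg hl hx (Fin.zero_le _)
  have hlow : ramp (lam 0 - lam (Fin.last (m + 2))) (x 0 - x (Fin.last (m + 1)).castSucc) ≤
      ramp (lam 0 - lam (Fin.last (m + 2))) (x 0 - x (Fin.last (m + 2))) :=
    ramp_mono hμ hb (sub_le_sub_left (hx (Fin.le_last _)) _)
  have hupp : ramp (lam 0 - lam (Fin.last (m + 2))) (x 0 - x (Fin.last (m + 2))) ≤
      2 * ramp (lam 0 - lam (Fin.last (m + 2))) (x 0 - x (Fin.last (m + 1)).castSucc) := by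
    refine (ramp_mono hμ (sub_nonneg.2 (hx (Fin.zero_le _))) ?_).trans (ramp_two_mul_le hμ hb)
    have h1 : x 0 - x 1 ≥ x (Fin.last (m + 1)).castSucc - x (Fin.last (m + 2)) := hgap
    have h2 : x (Fin.last (m + 1)).castSucc ≤ x 1 := hx (by
      rw [Fin.le_def]; simp)
    linarith
  generalize sat ((x 0 - x (Fin.last (m + 1)).castSucc) *
    (lam 0 - lam (Fin.last (m + 1)).castSucc)) = S at *
  generalize ∏ j : Fin m, sat ((x 0 - x j.succ.castSucc.castSucc) *
    (lam 0 - lam j.succ.castSucc.castSucc)) = T at *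
  generalize ramp (lam 0 - lam (Fin.last (m + 2))) (x 0 - x (Fin.last (m + 1)).castSucc) = b at *
  generalize ramp (lam 0 - lam (Fin.last (m + 2))) (x 0 - x (Fin.last (m + 2))) = a at *
  generalize closedForm (m + 2) lam x = G₂ at *
  generalize closedForm (m + 1) (dropPenultimate lam) (fun k => x k.castSucc) = Gp at *
  generalize closedForm (m + 1) (fun k => lam k.succ) (fun k => x k.succ) = Gs at *
  generalize closedForm m (dropFirstPenultimate lam) (fun k => x k.succ.castSucc) = G₀ at *
  generalize Iint (m + 2) lam x = I₂ at *
  generalize Iint (m + 1) (dropPenultimate lam) (fun k => x k.castSucc) = Ip at *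
  generalize Iint (m + 1) (fun k => lam k.succ) (fun k => x k.succ) = Is at *
  generalize Iint m (dropFirstPenultimate lam) (fun k => x k.succ.castSucc) = I₀ at *
  have hPQ : Gp * S * Gs ≤ G₂ * G₀ := by
    calc Gp * S * Gs = b * (T * G₀ * S * Gs) := by rw [hGp]; ring
      _ ≤ a * (T * G₀ * S * Gs) := by gcongr
      _ = G₂ * G₀ := by rw [hG₂]; ring
  have hQP : G₂ * G₀ ≤ 2 * (Gp * S * Gs) := by
    calc G₂ * G₀ = a * (T * G₀ * S * Gs) := by rw [hG₂]; ring
      _ ≤ 2 * b * (T * G₀ * S * Gs) := by gcongr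
      _ = 2 * (Gp * S * Gs) := by rw [hGp]; ring
  constructor
  · rw [div_mul_eq_mul_div, div_le_iff₀ (by positivity)]
    calc c₂ * c₀ * (Ip * S * Is) ≤ c₂ * c₀ * (D₁ * Gp * S * (D₁ * Gs)) := by gcongr
      _ = c₂ * c₀ * (D₁ * D₁) * (Gp * S * Gs) := by ring
      _ ≤ c₂ * c₀ * (D₁ * D₁) * (G₂ * G₀) := by gcongr
      _ = (c₂ * G₂) * (c₀ * G₀) * (D₁ * D₁) := by ring
      _ ≤ I₂ * I₀ * (D₁ * D₁) := by gcongr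
  · rw [div_mul_eq_mul_div, le_div_iff₀ (by positivity)]
    calc I₂ * I₀ * (c₁ * c₁) ≤ (D₂ * G₂) * (D₀ * G₀) * (c₁ * c₁) := by gcongr
      _ = D₂ * D₀ * (c₁ * c₁) * (G₂ * G₀) := by ring
      _ ≤ D₂ * D₀ * (c₁ * c₁) * (2 * (Gp * S * Gs)) := by gcongr
      _ = D₂ * D₀ * 2 * ((c₁ * Gp) * S * (c₁ * Gs)) := by ring
      _ ≤ D₂ * D₀ * 2 * (Ip * S * Is) := by gcongr
end

section
/- Let n ≥ 1 and let λ, x ∈ ℝⁿ be weakly decreasing and satisfy (λ_i−λ_j)(x_i−x_j) ≥ log(n!) for all 1 ≤ i < j ≤ n. Then (1/2)·e^{⟨λ,x⟩} ≤ ∑_{σ∈Sₙ} sgn(σ)·exp(∑_{k=1}^n λ_{σ(k)} x_k) ≤ n!·e^{⟨λ,x⟩}. (Consequently, in this range the spherical function of type A_{n−1} satisfies ψ_λ(x) ≍ e^{⟨λ,x⟩}/(V(λ)V(x)).) -/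
open Finset

/-- The identity pairing exceeds every other one by at least the common lower bound `L` for the
products `(lam i - lam j) * (x i - x j)`. -/
lemma sum_comp_perm_mul_add_le_of_ne_one {n : ℕ} {lam x : Fin n → ℝ} {L : ℝ}
    (hlam : Antitone lam) (hx : Antitone x)
    (hbig : ∀ i j : Fin n, i < j → L ≤ (lam i - lam j) * (x i - x j))
    {σ : Equiv.Perm (Fin n)} (hσ : σ ≠ 1) :
    ∑ k, lam (σ k) * x k + L ≤ ∑ k, lam k * x k := by
  have hne : (σ.support).Nonempty := by
    rwa [nonempty_iff_ne_empty, ne_eq, Equiv.Perm.support_eq_empty_iff]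
  set i := σ.support.min' hne
  have hi : σ i ≠ i := Equiv.Perm.mem_support.1 (σ.support.min'_mem hne)
  have hmin : ∀ k, σ k ≠ k → i ≤ k := fun k hk =>
    σ.support.min'_le k (Equiv.Perm.mem_support.2 hk)
  obtain ⟨j, hj⟩ := σ.surjective i
  have hji : j ≠ i := by rintro h; rw [h] at hj; exact hi hj
  have hij : i < j := lt_of_le_of_ne (hmin j (by rw [hj]; exact hji.symm)) hji.symm
  have hiσ : i < σ i :=
    lt_of_le_of_ne (hmin _ fun h => hi (σ.injective h)) hi.symm
  have hL : L ≤ (lam i - lam (σ i)) * (x i - x j) := by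
    refine (hbig i (min j (σ i)) (lt_min hij hiσ)).trans ?_
    have h1 := hlam (min_le_right j (σ i))
    have h2 := hx (min_le_left j (σ i))
    have h3 := hx (lt_min hij hiσ).le
    have h4 := hlam hiσ.le
    exact mul_le_mul (by linarith) (by linarith) (by linarith) (by linarith)
  have hmono : ∑ k, lam ((σ * Equiv.swap i j) k) * x k ≤ ∑ k, lam k * x k :=
    Monovary.sum_comp_perm_mul_le_sum_mul (hlam.monovary hx)
  have hsplit : ∀ f : Fin n → ℝ,
      ∑ k, f k = f i + f j + ∑ k ∈ (univ.erase i).erase j, f k := fun f => by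
    rw [← add_sum_erase univ f (mem_univ i),
      ← add_sum_erase (univ.erase i) f (mem_erase.2 ⟨hji, mem_univ j⟩), add_assoc]
  have hrest : ∑ k ∈ (univ.erase i).erase j, lam ((σ * Equiv.swap i j) k) * x k =
      ∑ k ∈ (univ.erase i).erase j, lam (σ k) * x k := by
    refine sum_congr rfl fun k hk => ?_
    simp only [mem_erase, mem_univ, and_true] at hk
    rw [Equiv.Perm.mul_apply, Equiv.swap_apply_of_ne_of_ne hk.2 hk.1]
  rw [hsplit fun k => lam ((σ * Equiv.swap i j) k) * x k, hrest] at hmono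
  rw [hsplit fun k => lam (σ k) * x k]
  simp only [Equiv.Perm.mul_apply, Equiv.swap_apply_left, Equiv.swap_apply_right, hj] at hmono ⊢
  linarith

lemma sum_sign_perm_eq_zero {n : ℕ} (hn : 2 ≤ n) :
    ∑ σ : Equiv.Perm (Fin n), ((Equiv.Perm.sign σ : ℤ) : ℝ) = 0 := by
  have hdet : (Matrix.of fun _ _ : Fin n => (1 : ℝ)).det = 0 :=
    Matrix.det_zero_of_row_eq (i := ⟨0, by omega⟩) (j := ⟨1, by omega⟩) (by simp) rfl
  simpa [Matrix.det_apply'] using hdet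

/-- If `λ, x` are weakly decreasing and `(λ_i−λ_j)(x_i−x_j) ≥ log(n!)` for all `i < j`, then
`(1/2)·e^{⟨λ,x⟩} ≤ ∑_{σ∈Sₙ} sgn(σ)·e^{∑_k λ_{σ(k)} x_k} ≤ n!·e^{⟨λ,x⟩}`. -/
theorem altSum_estimate_large (n : ℕ) (hn : 1 ≤ n) (lam x : Fin n → ℝ)
    (hlam : Antitone lam) (hx : Antitone x)
    (hbig : ∀ i j : Fin n, i < j →
      Real.log (Nat.factorial n) ≤ (lam i - lam j) * (x i - x j)) :
    (1 / 2) * Real.exp (∑ k, lam k * x k) ≤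
      (∑ σ : Equiv.Perm (Fin n), ((Equiv.Perm.sign σ : ℤ) : ℝ) *
        Real.exp (∑ k, lam (σ k) * x k)) ∧
    (∑ σ : Equiv.Perm (Fin n), ((Equiv.Perm.sign σ : ℤ) : ℝ) *
        Real.exp (∑ k, lam (σ k) * x k)) ≤
      (Nat.factorial n : ℝ) * Real.exp (∑ k, lam k * x k) := by
  have hfac : (0 : ℝ) < Nat.factorial n := by exact_mod_cast n.factorial_pos
  set E := Real.exp (∑ k, lam k * x k) with hE
  have hEpos : 0 < E := Real.exp_pos _
  have hsign : ∀ σ : Equiv.Perm (Fin n), ((Equiv.Perm.sign σ : ℤ) : ℝ) = 1 ∨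
      ((Equiv.Perm.sign σ : ℤ) : ℝ) = -1 := fun σ => by
    rcases Int.units_eq_one_or (Equiv.Perm.sign σ) with h | h <;> simp [h]
  constructor
  · rcases hn.eq_or_lt with rfl | hn2
    · simp at hE ⊢
      linarith
    · have hterm : ∀ σ : Equiv.Perm (Fin n),
          (((Equiv.Perm.sign σ : ℤ) : ℝ) - 1) / 2 * (E / Nat.factorial n) +
            (if σ = 1 then E else 0) ≤
          ((Equiv.Perm.sign σ : ℤ) : ℝ) * Real.exp (∑ k, lam (σ k) * x k) := fun σ => by
        by_cases hσ : σ = 1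
        · simp [hσ, hE]
        · have hle : Real.exp (∑ k, lam (σ k) * x k) ≤ E / Nat.factorial n := by
            rw [le_div_iff₀ hfac, hE, ← Real.exp_log hfac, ← Real.exp_add]
            exact Real.exp_le_exp.2 (sum_comp_perm_mul_add_le_of_ne_one hlam hx hbig hσ)
          have hpos := Real.exp_pos (∑ k, lam (σ k) * x k)
          rcases hsign σ with h | h <;> rw [h, if_neg hσ] <;> linarith
      refine le_trans (le_of_eq ?_) (sum_le_sum fun σ _ => hterm σ)
      rw [sum_add_distrib, ← sum_mul, ← sum_div, sum_sub_distrib, sum_sign_perm_eq_zero hn2]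
      simp only [sum_const, card_univ, Fintype.card_perm, Fintype.card_fin, nsmul_eq_mul,
        sum_ite_eq', mem_univ, if_true]
      field_simp
      ring
  · have hterm : ∀ σ : Equiv.Perm (Fin n),
        ((Equiv.Perm.sign σ : ℤ) : ℝ) * Real.exp (∑ k, lam (σ k) * x k) ≤ E := fun σ => by
      have hle : Real.exp (∑ k, lam (σ k) * x k) ≤ E :=
        Real.exp_le_exp.2 (Monovary.sum_comp_perm_mul_le_sum_mul (hlam.monovary hx))
      have hpos := Real.exp_pos (∑ k, lam (σ k) * x k)
      rcases hsign σ with h | h <;> rw [h] <;> linarith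
    refine (sum_le_sum fun σ _ => hterm σ).trans (le_of_eq ?_)
    simp [Fintype.card_perm]
end

section
/- For every n ≥ 1 and every δ > 0 there exist constants C₁, C₂ > 0 depending only on n and δ such that for all weakly decreasing λ, x ∈ ℝⁿ satisfying (λ_i−λ_{i+1})(x_j−x_{j+1}) ≤ δ for all 1 ≤ i, j ≤ n−1 (smallness on all pairs of simple roots), one has C₁·e^{⟨λ,x⟩}·V(λ)·V(x) ≤ ∑_{σ∈Sₙ} sgn(σ)·exp(∑_{k=1}^n λ_{σ(k)} x_k) ≤ C₂·e^{⟨λ,x⟩}·V(λ)·V(x). (Equivalently, the spherical function of type A_{n−1} satisfies ψ_λ(x) ≍ e^{⟨λ,x⟩} in this range, with constants depending only on n and δ.) -/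
open Finset

/-- The alternating sum `A(ξ,x) = ∑_{σ ∈ Sₙ} sgn(σ) · exp(∑_k ξ_{σ(k)} x_k)`. -/
noncomputable def altSum {n : ℕ} (ξ x : Fin n → ℝ) : ℝ :=
  ∑ σ : Equiv.Perm (Fin n), ((Equiv.Perm.sign σ : ℤ) : ℝ) * Real.exp (∑ k, ξ (σ k) * x k)

/-- The Vandermonde product `V(x) = ∏_{1 ≤ i < j ≤ n} (x_i − x_j)`. -/
def vand {n : ℕ} (x : Fin n → ℝ) : ℝ :=
  ∏ i : Fin n, ∏ j ∈ Finset.Ioi i, (x i - x j)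

open MeasureTheory in
/-- Integrating the columns of a determinant one by one over intervals. -/
theorem integral_Icc_det {m : ℕ} (g : Fin m → ℝ → ℝ) (hg : ∀ i, Continuous (g i))
    (a b : Fin m → ℝ) :
    ∫ t in Set.Icc a b, (Matrix.of fun i j => g i (t j)).det =
      (Matrix.of fun i j => ∫ s in Set.Icc (a j) (b j), g i s).det := by
  simp only [Matrix.det_apply', Matrix.of_apply]
  rw [integral_finsetSum]
  · refine Finset.sum_congr rfl fun σ _ => ?_
    rw [integral_const_mul, ← Set.pi_univ_Icc, volume_pi, Measure.restrict_pi_pi,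
      integral_fintype_prod_eq_prod (fun i s => g (σ i) s)]
  · intro σ _
    refine Continuous.integrableOn_Icc ?_
    fun_prop

open MeasureTheory in
/-- A determinant with a constant first row, written as an integral over interlacing points. -/
theorem det_eq_integral_interlacing {m : ℕ} (f g : Fin m → ℝ → ℝ) (hg : ∀ i, Continuous (g i))
    (hfg : ∀ i t, HasDerivAt (f i) (-(g i t)) t) (x : Fin (m + 1) → ℝ) (hx : Antitone x)
    (M : Matrix (Fin (m + 1)) (Fin (m + 1)) ℝ) (h0 : ∀ j, M 0 j = 1)
    (hs : ∀ i j, M i.succ j = f i (x j)) :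
    M.det = ∫ t in Set.Icc (fun j : Fin m => x j.succ) (fun j => x j.castSucc),
      (Matrix.of fun i j => g i (t j)).det := by
  rw [integral_Icc_det g hg]
  have hint : ∀ i (j : Fin m), ∫ s in Set.Icc (x j.succ) (x j.castSucc), g i s =
      f i (x j.succ) - f i (x j.castSucc) := by
    intro i j
    rw [integral_Icc_eq_integral_Ioc,
      ← intervalIntegral.integral_of_le (hx (Fin.castSucc_lt_succ (i := j)).le),
      intervalIntegral.integral_eq_sub_of_hasDerivAt (f := fun t => -f i t)
        (fun t _ => by simpa using (hfg i t).fun_neg) ((hg i).intervalIntegrable _ _)]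
    ring
  rw [Matrix.det_eq_of_forall_col_eq_smul_add_pred (A := M)
    (B := Matrix.of fun i j => Fin.cases (M i 0) (fun j => M i j.succ - M i j.castSucc) j)
    (fun _ => 1) (by simp) (by simp), Matrix.det_succ_row_zero, Fin.sum_univ_succ]
  simp [h0, Matrix.submatrix]
  congr 1
  ext i j
  simp [hs, hint]

theorem altSum_eq_det {n : ℕ} (ξ x : Fin n → ℝ) :
    altSum ξ x = (Matrix.of fun i j => Real.exp (ξ i * x j)).det := by
  simp [altSum, Matrix.det_apply, Real.exp_sum, Units.smul_def]

theorem vand_eq_det {n : ℕ} (x : Fin n → ℝ) :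
    vand x = (Matrix.of fun i j : Fin n => (-x j) ^ (i : ℕ)).det := by
  rw [← Matrix.det_transpose]
  have h := Matrix.det_vandermonde (fun j => -x j)
  rw [vand]
  simp only [sub_neg_eq_add, neg_add_eq_sub] at h
  exact h.symm

theorem vand_succ {m : ℕ} (x : Fin (m + 1) → ℝ) :
    vand x = (∏ i : Fin m, (x 0 - x i.succ)) * vand fun i : Fin m => x i.succ := by
  simp [vand, Fin.prod_univ_succ, Fin.prod_Ioi_succ]

theorem vand_nonneg {n : ℕ} {x : Fin n → ℝ} (hx : Antitone x) : 0 ≤ vand x :=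
  Finset.prod_nonneg fun _ _ => Finset.prod_nonneg fun _ hj =>
    sub_nonneg.2 (hx (Finset.mem_Ioi.1 hj).le)

theorem continuous_vand {n : ℕ} : Continuous (vand : (Fin n → ℝ) → ℝ) := by
  unfold vand
  fun_prop

theorem continuous_altSum {n : ℕ} (ξ : Fin n → ℝ) : Continuous (altSum ξ) := by
  unfold altSum
  fun_prop

theorem vand_eq_integral {m : ℕ} (x : Fin (m + 1) → ℝ) (hx : Antitone x) :
    vand x = (∏ i : Fin m, ((i : ℝ) + 1)) *
      ∫ t in Set.Icc (fun j : Fin m => x j.succ) (fun j => x j.castSucc), vand t := by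
  rw [vand_eq_det, ← MeasureTheory.integral_const_mul,
    det_eq_integral_interlacing (fun i t => (-t) ^ ((i : ℕ) + 1))
      (fun i t => ((i : ℝ) + 1) * (-t) ^ (i : ℕ)) (fun i => by fun_prop)
      (fun i t => by
        have h := (hasDerivAt_neg t).fun_pow ((i : ℕ) + 1)
        simpa using h) x hx _ (by simp) (by simp)]
  congr 1
  ext t
  rw [vand_eq_det, ← Matrix.det_mul_column]
  rfl

theorem altSum_eq_integral {m : ℕ} (ξ x : Fin (m + 1) → ℝ) (hξ : ξ 0 = 0) (hx : Antitone x) :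
    altSum ξ x = (∏ i : Fin m, (ξ 0 - ξ i.succ)) *
      ∫ t in Set.Icc (fun j : Fin m => x j.succ) (fun j => x j.castSucc),
        altSum (fun i => ξ i.succ) t := by
  rw [altSum_eq_det, ← MeasureTheory.integral_const_mul,
    det_eq_integral_interlacing (fun i t => Real.exp (ξ i.succ * t))
      (fun i t => (ξ 0 - ξ i.succ) * Real.exp (ξ i.succ * t)) (fun i => by fun_prop)
      (fun i t => by
        have h := (hasDerivAt_const_mul (x := t) (ξ i.succ)).exp
        convert h using 1
        rw [hξ]
        ring) x hx _ (by simp [hξ]) (by simp)]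
  congr 1
  ext t
  rw [altSum_eq_det, ← Matrix.det_mul_column]
  rfl

theorem altSum_sub_const {n : ℕ} (ξ x : Fin n → ℝ) (a : ℝ) :
    altSum (fun i => ξ i - a) x = Real.exp (-(a * ∑ k, x k)) * altSum ξ x := by
  simp only [altSum, Finset.mul_sum]
  refine Finset.sum_congr rfl fun σ _ => ?_
  rw [mul_left_comm, ← Real.exp_add]
  simp only [sub_mul, Finset.sum_sub_distrib, ← Finset.mul_sum]
  ring_nf

theorem vand_sub_const {n : ℕ} (ξ : Fin n → ℝ) (a : ℝ) :
    vand (fun i => ξ i - a) = vand ξ := by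
  simp [vand]

theorem antitone_of_mem_interlacing {m : ℕ} {x : Fin (m + 1) → ℝ} (hx : Antitone x)
    {t : Fin m → ℝ}
    (ht : t ∈ Set.Icc (fun j : Fin m => x j.succ) (fun j => x j.castSucc)) : Antitone t := by
  intro i j hij
  rcases hij.eq_or_lt with rfl | h
  · rfl
  · exact (ht.2 j).trans ((hx (Fin.succ_le_castSucc_iff.2 h)).trans (ht.1 i))

open MeasureTheory in
/-- Two-sided bound for the alternating sum by its extreme exponentials; the constant depends only
on the dimension. -/
theorem exists_altSum_bounds (n : ℕ) : ∃ c : ℝ, 0 < c ∧ ∀ ξ x : Fin n → ℝ,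
    Antitone ξ → Antitone x →
    c * (Real.exp (∑ k, ξ k * x k.rev) * vand ξ * vand x) ≤ altSum ξ x ∧
    altSum ξ x ≤ c * (Real.exp (∑ k, ξ k * x k) * vand ξ * vand x) := by
  induction n with
  | zero => exact ⟨1, one_pos, fun ξ x _ _ => by simp [altSum, vand]⟩
  | succ m ih =>
    obtain ⟨c, hc, ih⟩ := ih
    have hP : 0 < ∏ i : Fin m, ((i : ℝ) + 1) := Finset.prod_pos fun i _ => by positivity
    set P := ∏ i : Fin m, ((i : ℝ) + 1) with hPdef
    have key : ∀ ξ x : Fin (m + 1) → ℝ, ξ 0 = 0 → Antitone ξ → Antitone x →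
        c / P * (Real.exp (∑ k, ξ k * x k.rev) * vand ξ * vand x) ≤ altSum ξ x ∧
        altSum ξ x ≤ c / P * (Real.exp (∑ k, ξ k * x k) * vand ξ * vand x) := by
      intro ξ x h0 hξ hx
      set B := Set.Icc (fun j : Fin m => x j.succ) (fun j => x j.castSucc) with hB
      have hξ' : Antitone fun i : Fin m => ξ i.succ :=
        fun i j h => hξ (Fin.succ_le_succ_iff.2 h)
      have hneg : ∀ i : Fin m, ξ i.succ ≤ 0 := fun i => h0 ▸ hξ (Fin.zero_le _)
      have hQ : 0 ≤ ∏ i : Fin m, (ξ 0 - ξ i.succ) :=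
        Finset.prod_nonneg fun i _ => sub_nonneg.2 (hξ (Fin.zero_le _))
      have hA : IntegrableOn (altSum fun i => ξ i.succ) B :=
        (continuous_altSum _).integrableOn_Icc
      have hV : ∀ r : ℝ, IntegrableOn (fun t : Fin m → ℝ => c * (r * vand t)) B := fun r =>
        (continuous_const.mul (continuous_const.mul continuous_vand)).integrableOn_Icc
      have hscale : ∀ E : ℝ, c / P * (E * vand ξ * vand x) =
          (∏ i : Fin m, (ξ 0 - ξ i.succ)) *
            ∫ t in B, c * (E * vand (fun i => ξ i.succ) * vand t) := by
        intro E
        rw [integral_const_mul, integral_const_mul, vand_succ ξ, vand_eq_integral x hx, ← hPdef, ← hB]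
        field_simp
      rw [hscale, hscale, altSum_eq_integral ξ x h0 hx]
      constructor
      · refine mul_le_mul_of_nonneg_left
          (setIntegral_mono_on (hV _) hA measurableSet_Icc fun t ht => ?_) hQ
        have hta := antitone_of_mem_interlacing hx ht
        refine le_trans ?_ (ih _ t hξ' hta).1
        have hE : ∑ k, ξ k * x k.rev ≤ ∑ k : Fin m, ξ k.succ * t k.rev := by
          rw [Fin.sum_univ_succ, h0, zero_mul, zero_add]
          refine Finset.sum_le_sum fun k _ => mul_le_mul_of_nonpos_left ?_ (hneg k)
          rw [Fin.rev_succ]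
          exact ht.2 k.rev
        have := vand_nonneg hξ'
        have := vand_nonneg hta
        gcongr
      · refine mul_le_mul_of_nonneg_left
          (setIntegral_mono_on hA (hV _) measurableSet_Icc fun t ht => ?_) hQ
        have hta := antitone_of_mem_interlacing hx ht
        refine (ih _ t hξ' hta).2.trans ?_
        have hE : ∑ k : Fin m, ξ k.succ * t k ≤ ∑ k, ξ k * x k := by
          rw [Fin.sum_univ_succ (fun k => ξ k * x k), h0, zero_mul, zero_add]
          exact Finset.sum_le_sum fun k _ => mul_le_mul_of_nonpos_left (ht.1 k) (hneg k)
        have := vand_nonneg hξ'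
        have := vand_nonneg hta
        gcongr
    refine ⟨c / P, div_pos hc hP, fun ξ x hξ hx => ?_⟩
    have h := key (fun i => ξ i - ξ 0) x (sub_self _)
      (fun i j hij => sub_le_sub_right (hξ hij) _) hx
    have hrev : ∑ k : Fin (m + 1), x k.rev = ∑ k, x k :=
      Equiv.sum_comp Fin.revPerm x
    have hexp : ∀ y : Fin (m + 1) → ℝ, ∑ k, y k = ∑ k, x k →
        Real.exp (∑ k, (ξ k - ξ 0) * y k) =
          Real.exp (-(ξ 0 * ∑ k, x k)) * Real.exp (∑ k, ξ k * y k) := by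
      intro y hy
      rw [← Real.exp_add, ← hy]
      simp only [sub_mul, Finset.sum_sub_distrib, Finset.mul_sum]
      ring_nf
    rw [altSum_sub_const, vand_sub_const, hexp (fun k => x k.rev) hrev, hexp x rfl] at h
    have hpos := Real.exp_pos (-(ξ 0 * ∑ k, x k))
    constructor
    · refine le_of_mul_le_mul_left ?_ hpos
      calc _ = _ := by ring
        _ ≤ _ := h.1
    · refine le_of_mul_le_mul_left ?_ hpos
      calc _ ≤ _ := h.2
        _ = _ := by ring

theorem sum_mul_sub_sum_mul_rev_le {m : ℕ} (δ : ℝ) (ξ x : Fin (m + 1) → ℝ) (hξ : Antitone ξ)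
    (hx : Antitone x)
    (h : ∀ i j : Fin m, (ξ i.castSucc - ξ i.succ) * (x j.castSucc - x j.succ) ≤ δ) :
    ∑ k, ξ k * x k - ∑ k, ξ k * x k.rev ≤ (m + 1) * (m * (m * δ)) / 2 := by
  have htel : ∀ y : Fin (m + 1) → ℝ,
      y 0 - y (Fin.last m) = ∑ i : Fin m, (y i.castSucc - y i.succ) := by
    intro y
    have h₁ := Fin.sum_univ_succ y
    have h₂ := Fin.sum_univ_castSucc y
    rw [Finset.sum_sub_distrib]
    linarith
  have hends : (ξ 0 - ξ (Fin.last m)) * (x 0 - x (Fin.last m)) ≤ m * (m * δ) := by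
    rw [htel ξ, htel x, Finset.sum_mul_sum]
    calc _ ≤ ∑ _i : Fin m, ∑ _j : Fin m, δ :=
          Finset.sum_le_sum fun i _ => Finset.sum_le_sum fun j _ => h i j
      _ = _ := by simp
  have habs : ∀ y : Fin (m + 1) → ℝ, Antitone y → ∀ k l : Fin (m + 1),
      |y k - y l| ≤ y 0 - y (Fin.last m) := by
    intro y hy k l
    have := hy (Fin.zero_le k)
    have := hy (Fin.zero_le l)
    have := hy (Fin.le_last k)
    have := hy (Fin.le_last l)
    exact abs_le.2 ⟨by linarith, by linarith⟩
  have hterm : ∀ k : Fin (m + 1), (ξ k - ξ k.rev) * (x k - x k.rev) ≤ m * (m * δ) := by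
    intro k
    refine (le_abs_self _).trans ?_
    rw [abs_mul]
    exact (mul_le_mul (habs ξ hξ _ _) (habs x hx _ _) (abs_nonneg _)
      (sub_nonneg.2 (hξ (Fin.zero_le _)))).trans hends
  have hsum : ∑ k, (ξ k - ξ k.rev) * (x k - x k.rev) ≤ (m + 1) * (m * (m * δ)) := by
    calc _ ≤ ∑ _k : Fin (m + 1), (m * (m * δ) : ℝ) := Finset.sum_le_sum fun k _ => hterm k
      _ = _ := by simp
  have h₁ : ∑ k : Fin (m + 1), ξ k.rev * x k.rev = ∑ k, ξ k * x k :=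
    Equiv.sum_comp Fin.revPerm fun k => ξ k * x k
  have h₂ : ∑ k : Fin (m + 1), ξ k.rev * x k = ∑ k, ξ k * x k.rev := by
    simpa using Equiv.sum_comp Fin.revPerm fun k => ξ k * x k.rev
  simp only [sub_mul, mul_sub, Finset.sum_sub_distrib, h₁, h₂] at hsum
  linarith

/-- If all products of simple-root values `(λ_i−λ_{i+1})(x_j−x_{j+1})` are `≤ δ`, then
`∑_σ sgn(σ) e^{∑ λ_{σ(k)} x_k} ≍ e^{⟨λ,x⟩} V(λ) V(x)`, with constants depending only
on `n` and `δ`. -/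
theorem altSum_estimate_small (n : ℕ) (hn : 1 ≤ n) (δ : ℝ) (hδ : 0 < δ) :
    ∃ C₁ C₂ : ℝ, 0 < C₁ ∧ 0 < C₂ ∧
      ∀ lam x : Fin n → ℝ, Antitone lam → Antitone x →
        (∀ i j : Fin n, ∀ hi : (i : ℕ) + 1 < n, ∀ hj : (j : ℕ) + 1 < n,
          (lam i - lam ⟨(i : ℕ) + 1, hi⟩) * (x j - x ⟨(j : ℕ) + 1, hj⟩) ≤ δ) →
        C₁ * (Real.exp (∑ k, lam k * x k) * vand lam * vand x) ≤ altSum lam x ∧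
        altSum lam x ≤ C₂ * (Real.exp (∑ k, lam k * x k) * vand lam * vand x) := by
  obtain ⟨m, rfl⟩ := Nat.exists_eq_add_of_le' hn
  obtain ⟨c, hc, hbound⟩ := exists_altSum_bounds (m + 1)
  refine ⟨c * Real.exp (-((m + 1) * (m * (m * δ)) / 2)), c, by positivity, hc, ?_⟩
  intro lam x hlam hx hsmall
  refine ⟨le_trans ?_ (hbound lam x hlam hx).1, (hbound lam x hlam hx).2⟩
  have hgap := sum_mul_sub_sum_mul_rev_le δ lam x hlam hx fun i j =>
    hsmall i.castSucc j.castSucc (by simp) (by simp)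
  have := vand_nonneg hlam
  have := vand_nonneg hx
  rw [mul_assoc c, ← mul_assoc (Real.exp _), ← mul_assoc (Real.exp _), ← Real.exp_add]
  gcongr
  linarith
end

section
/- Let n ≥ 2, let σ ∈ Sₙ, let 1 ≤ k ≤ n−1, and let y ∈ ℝⁿ be weakly decreasing. If ∑_{i=1}^k (y_i − y_{σ(i)}) ≠ 0, then ∑_{i=1}^k (y_i − y_{σ(i)}) ≥ y_k − y_{k+1}. (In the root-system language: if the coefficient a_k^w(Y) of the simple root α_k in the decomposition of Y − wY is nonzero for dominant Y, then α_k occurs in a_k^w with a positive integer coefficient, so a_k^w(Y) ≥ α_k(Y).) -/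
open Finset

/-- If `s ≠ t` have the same cardinality, `f ≥ a` on `s` and `f ≤ b` off `s`, where `b ≤ a`, then the
sums of `f` over `s` and over `t` differ by at least `a - b`. -/
theorem sub_le_sum_sub_sum_of_card_eq {ι : Type*} [DecidableEq ι] {s t : Finset ι}
    (hcard : s.card = t.card) (hst : s ≠ t) {f : ι → ℝ} {a b : ℝ} (hab : b ≤ a)
    (ha : ∀ i ∈ s, a ≤ f i) (hb : ∀ i, i ∉ s → f i ≤ b) :
    a - b ≤ ∑ i ∈ s, f i - ∑ i ∈ t, f i := by
  have hsdiff : (s \ t).card = (t \ s).card := Finset.card_sdiff_comm hcard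
  have hpos : 1 ≤ (s \ t).card := by
    rw [Nat.one_le_iff_ne_zero, Finset.card_ne_zero, Finset.sdiff_nonempty]
    exact fun h => hst (Finset.eq_of_subset_of_card_le h hcard.ge)
  have hlower : (s \ t).card • a ≤ ∑ i ∈ s \ t, f i :=
    Finset.card_nsmul_le_sum _ _ _ fun i hi => ha i (Finset.mem_sdiff.1 hi).1
  have hupper : ∑ i ∈ t \ s, f i ≤ (t \ s).card • b :=
    Finset.sum_le_card_nsmul _ _ _ fun i hi => hb i (Finset.mem_sdiff.1 hi).2
  rw [nsmul_eq_mul] at hlower hupper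
  rw [← hsdiff] at hupper
  have hpos_real : (1 : ℝ) ≤ (s \ t).card := by exact_mod_cast hpos
  rw [← Finset.sum_sdiff_sub_sum_sdiff]
  nlinarith

/-- For `n = m + 2 ≥ 2`, `σ ∈ Sₙ`, `1 ≤ k ≤ n − 1` and weakly decreasing `y ∈ ℝⁿ`: if the
coefficient `∑_{i=1}^k (y_i − y_{σ(i)})` of the simple root `α_k` in `y − σ·y` is nonzero,
then it is at least `α_k(y) = y_k − y_{k+1}`. -/
theorem coeff_ge_simple_root (m : ℕ) (σ : Equiv.Perm (Fin (m + 2)))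
    (k : ℕ) (hk1 : 1 ≤ k) (hk2 : k ≤ m + 1)
    (y : Fin (m + 2) → ℝ) (hy : Antitone y)
    (hne : ∑ i ∈ Finset.univ.filter (fun i : Fin (m + 2) => (i : ℕ) < k),
      (y i - y (σ i)) ≠ 0) :
    y ⟨k - 1, by omega⟩ - y ⟨k, by omega⟩ ≤
      ∑ i ∈ Finset.univ.filter (fun i : Fin (m + 2) => (i : ℕ) < k), (y i - y (σ i)) := by
  set s := Finset.univ.filter (fun i : Fin (m + 2) => (i : ℕ) < k) with hs
  have hsum : ∑ i ∈ s, (y i - y (σ i)) = ∑ i ∈ s, y i - ∑ i ∈ s.map σ.toEmbedding, y i := by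
    simp [Finset.sum_sub_distrib, Finset.sum_map]
  rw [hsum] at hne ⊢
  refine sub_le_sum_sub_sum_of_card_eq (Finset.card_map _).symm
    (fun h => hne (by rw [← h, sub_self])) (hy ?_) (fun i hi => hy ?_) (fun i hi => hy ?_)
  · simp [Fin.le_def]
  · simp only [hs, Finset.mem_filter, Finset.mem_univ, true_and] at hi
    simp only [Fin.le_def]
    omega
  · simp only [hs, Finset.mem_filter, Finset.mem_univ, true_and] at hi
    simp only [Fin.le_def]
    omega
end

section
/- Let n ≥ 2, let σ ∈ Sₙ with σ ≠ id, and let λ, x ∈ ℝⁿ be weakly decreasing. Then there exists k with 1 ≤ k ≤ n−1 such that ∑_{i=1}^n λ_i x_i − ∑_{i=1}^n λ_{σ(i)} x_i ≥ (λ_k − λ_{k+1})·(x_k − x_{k+1}). -/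
open Finset

/-- A non-identity permutation of `Fin n` moves some point up. -/
lemma exists_lt_apply_of_ne_one {n : ℕ} {σ : Equiv.Perm (Fin n)} (hσ : σ ≠ 1) :
    ∃ i, i < σ i := by
  by_contra! h
  refine hσ (Equiv.ext fun i => ?_)
  induction i using WellFoundedLT.induction with
  | ind i ih =>
    rcases (h i).lt_or_eq with hlt | heq
    · exact σ.injective (ih _ hlt)
    · exact heq

/-- If a permutation moves `i` strictly above `i`, then it moves some `j > i` to a point
at or below `i`. -/
lemma exists_gt_apply_le_of_lt_apply {n : ℕ} {σ : Equiv.Perm (Fin n)} {i : Fin n}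
    (hi : i < σ i) : ∃ j, i < j ∧ σ j ≤ i := by
  by_contra! h
  have hmaps : ∀ j ∈ Ici i, σ j ∈ Ioi i := fun j hj => by
    rcases (mem_Ici.1 hj).eq_or_lt with rfl | hlt
    · exact mem_Ioi.2 hi
    · exact mem_Ioi.2 (h j hlt)
  have hcard := card_le_card_of_injOn σ hmaps σ.injective.injOn
  rw [Fin.card_Ici, Fin.card_Ioi] at hcard
  lia

/-- The effect on `∑ p, f (σ p) * g p` of precomposing `σ` with a transposition. -/
lemma sum_comp_mul_swap_sub {ι : Type*} [Fintype ι] [DecidableEq ι] (σ : Equiv.Perm ι)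
    (f g : ι → ℝ) {i j : ι} (hij : i ≠ j) :
    ∑ p, f ((σ * Equiv.swap i j) p) * g p - ∑ p, f (σ p) * g p =
      (f (σ j) - f (σ i)) * (g i - g j) := by
  rw [← sum_sub_distrib, Fintype.sum_eq_add i j hij]
  · simp only [Equiv.Perm.mul_apply, Equiv.swap_apply_left, Equiv.swap_apply_right]
    ring
  · rintro p ⟨hpi, hpj⟩
    simp [Equiv.swap_apply_of_ne_of_ne hpi hpj]

/-- For `n = m + 2 ≥ 2`, a non-identity permutation `σ ∈ Sₙ` and weakly decreasing
`λ, x ∈ ℝⁿ`, there is `k` with `1 ≤ k ≤ n−1` such that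
`⟨λ,x⟩ − ⟨σ·λ,x⟩ ≥ (λ_k − λ_{k+1})(x_k − x_{k+1})`. -/
theorem gap_ge_simple_root_product (m : ℕ) (σ : Equiv.Perm (Fin (m + 2))) (hσ : σ ≠ 1)
    (lam x : Fin (m + 2) → ℝ) (hlam : Antitone lam) (hx : Antitone x) :
    ∃ k : Fin (m + 1),
      (lam k.castSucc - lam k.succ) * (x k.castSucc - x k.succ) ≤
        (∑ i, lam i * x i) - ∑ i, lam (σ i) * x i := by
  obtain ⟨i, hi⟩ := exists_lt_apply_of_ne_one hσ
  obtain ⟨j, hij, hj⟩ := exists_gt_apply_le_of_lt_apply hi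
  obtain ⟨k, rfl⟩ := Fin.exists_castSucc_eq.2 (Fin.ne_last_of_lt hij)
  refine ⟨k, ?_⟩
  have hrearr := (hlam.monovary hx).sum_comp_perm_mul_le_sum_mul
    (σ := σ * Equiv.swap k.castSucc j)
  have hswap := sum_comp_mul_swap_sub σ lam x hij.ne
  have hlam_le : lam k.castSucc - lam k.succ ≤ lam (σ j) - lam (σ k.castSucc) :=
    sub_le_sub (hlam hj) (hlam (Fin.castSucc_lt_iff_succ_le.1 hi))
  have hx_le : x k.castSucc - x k.succ ≤ x k.castSucc - x j :=
    sub_le_sub_left (hx (Fin.castSucc_lt_iff_succ_le.1 hij)) _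
  have hk : k.castSucc ≤ k.succ := Fin.castSucc_lt_succ.le
  have hprod := mul_le_mul hlam_le hx_le (sub_nonneg.2 (hx hk))
    ((sub_nonneg.2 (hlam hk)).trans hlam_le)
  linarith
end

section
/- Let n ≥ 2 and let λ, x ∈ ℝⁿ be weakly decreasing and satisfy (λ_i−λ_j)(x_i−x_j) ≥ log(n!) for all 1 ≤ i < j ≤ n. Then for every permutation σ ∈ Sₙ with σ ≠ id one has exp(∑_{k=1}^n λ_{σ(k)} x_k) ≤ (1/n!)·exp(∑_{k=1}^n λ_k x_k). -/
open Finset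

/-- The largest point moved by a nontrivial permutation: its image and preimage are both smaller. -/
lemma exists_apply_lt_and_symm_lt {α : Type*} [LinearOrder α] [Fintype α]
    {σ : Equiv.Perm α} (hσ : σ ≠ 1) : ∃ m p, σ m < m ∧ p < m ∧ σ p = m := by
  have hne : σ.support.Nonempty := by
    rwa [Finset.nonempty_iff_ne_empty, Ne, Equiv.Perm.support_eq_empty_iff]
  set m := σ.support.max' hne
  have hm : σ m ≠ m := Equiv.Perm.mem_support.mp (σ.support.max'_mem hne)
  have hmax (k : α) (hk : σ k ≠ k) : k ≤ m :=
    σ.support.le_max' k (Equiv.Perm.mem_support.mpr hk)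
  have hp : σ (σ.symm m) = m := σ.apply_symm_apply m
  have hpm : σ.symm m ≠ m := fun h => hm (by rwa [h] at hp)
  exact ⟨m, σ.symm m, lt_of_le_of_ne (hmax _ fun h => hm (σ.injective h)) hm,
    lt_of_le_of_ne (hmax _ (hp.trans_ne hpm.symm)) hpm, hp⟩

/-- Quantitative rearrangement inequality: if every pairwise swap of two antitone families costs
at least `c`, then so does every nontrivial permutation. -/
lemma add_sum_comp_perm_mul_le_sum_mul {α : Type*} [LinearOrder α] [Fintype α] {f g : α → ℝ}
    {c : ℝ} (hf : Antitone f) (hg : Antitone g)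
    (hc : ∀ i j, i < j → c ≤ (f i - f j) * (g i - g j)) {σ : Equiv.Perm α} (hσ : σ ≠ 1) :
    c + ∑ k, f (σ k) * g k ≤ ∑ k, f k * g k := by
  obtain ⟨m, p, ham, hpm, hp⟩ := exists_apply_lt_and_symm_lt hσ
  have hswap : ∑ k, (f ((σ * Equiv.swap p m) k) * g k - f (σ k) * g k) =
      (f (σ m) - f m) * (g p - g m) := by
    rw [Fintype.sum_eq_add p m hpm.ne]
    · simp [hp]; ring
    · rintro k ⟨hkp, hkm⟩
      simp [Equiv.swap_apply_of_ne_of_ne hkp hkm]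
  have hgap : c ≤ (f (σ m) - f m) * (g p - g m) := by
    have hq : max (σ m) p < m := max_lt ham hpm
    refine (hc _ _ hq).trans (mul_le_mul ?_ ?_ ?_ ?_)
    · exact sub_le_sub_right (hf (le_max_left _ _)) _
    · exact sub_le_sub_right (hg (le_max_right _ _)) _
    · exact sub_nonneg.mpr (hg hq.le)
    · exact sub_nonneg.mpr (hf ham.le)
  have hrearr := (hf.monovary hg).sum_comp_perm_mul_le_sum_mul (σ := σ * Equiv.swap p m)
  rw [Finset.sum_sub_distrib] at hswap
  linarith

/-- If `λ, x ∈ ℝⁿ` (`n ≥ 2`) are weakly decreasing and `(λ_i−λ_j)(x_i−x_j) ≥ log(n!)` for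
all `i < j`, then for every permutation `σ ≠ id`,
`exp(∑ λ_{σ(k)} x_k) ≤ (1/n!)·exp(∑ λ_k x_k)`. -/
theorem exp_perm_le (n : ℕ) (hn : 2 ≤ n) (lam x : Fin n → ℝ)
    (hlam : Antitone lam) (hx : Antitone x)
    (hbig : ∀ i j : Fin n, i < j →
      Real.log (Nat.factorial n) ≤ (lam i - lam j) * (x i - x j))
    (σ : Equiv.Perm (Fin n)) (hσ : σ ≠ 1) :
    Real.exp (∑ k, lam (σ k) * x k) ≤
      (1 / (Nat.factorial n : ℝ)) * Real.exp (∑ k, lam k * x k) := by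
  have hpos : (0 : ℝ) < Nat.factorial n := by exact_mod_cast n.factorial_pos
  have h := Real.exp_le_exp.mpr (add_sum_comp_perm_mul_le_sum_mul hlam hx hbig hσ)
  rw [Real.exp_add, Real.exp_log hpos] at h
  rwa [one_div, le_inv_mul_iff₀ hpos]
end

section
/- Let λ_1 ≥ λ_2 and x_1 ≥ x_2 be real numbers and set u = (λ_1−λ_2)(x_1−x_2). Then (u/(1+u))·e^{λ_1x_1+λ_2x_2} ≤ e^{λ_1x_1+λ_2x_2} − e^{λ_2x_1+λ_1x_2} ≤ (2u/(1+u))·e^{λ_1x_1+λ_2x_2}. (This is the sharp two-sided estimate of the spherical function in the rank-one case A_1: ψ_λ(x) ≍ e^{λ_1x_1+λ_2x_2}/(1+(λ_1−λ_2)(x_1−x_2)).) -/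
/-- Lower rational bound for `1 - e^{-u}` on `[0, ∞)`. -/
theorem div_one_add_le_one_sub_exp_neg {u : ℝ} (hu : 0 ≤ u) :
    u / (1 + u) ≤ 1 - Real.exp (-u) := by
  have hpos : 0 < 1 + u := by linarith
  have hexp : Real.exp (-u) ≤ (1 + u)⁻¹ := by
    rw [Real.exp_neg]
    exact inv_anti₀ hpos (by linarith [Real.add_one_le_exp u])
  have hdiv : u / (1 + u) = 1 - (1 + u)⁻¹ := by
    field_simp
    ring
  linarith

/-- Upper rational bound for `1 - e^{-u}` on `[0, ∞)`. -/
theorem one_sub_exp_neg_le_two_mul_div_one_add {u : ℝ} (hu : 0 ≤ u) :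
    1 - Real.exp (-u) ≤ 2 * u / (1 + u) := by
  rw [le_div_iff₀ (by linarith)]
  have hexp := Real.add_one_le_exp (-u)
  have hpos := Real.exp_pos (-u)
  rcases le_total u 1 with h | h <;> nlinarith

/-- Rank-one (`A₁`) sharp estimate: for `λ₁ ≥ λ₂`, `x₁ ≥ x₂` and
`u = (λ₁−λ₂)(x₁−x₂)`, one has
`(u/(1+u))·e^{λ₁x₁+λ₂x₂} ≤ e^{λ₁x₁+λ₂x₂} − e^{λ₂x₁+λ₁x₂} ≤ (2u/(1+u))·e^{λ₁x₁+λ₂x₂}`. -/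
theorem rank_one_estimate (l₁ l₂ x₁ x₂ : ℝ) (hl : l₂ ≤ l₁) (hx : x₂ ≤ x₁) :
    ((l₁ - l₂) * (x₁ - x₂) / (1 + (l₁ - l₂) * (x₁ - x₂))) * Real.exp (l₁ * x₁ + l₂ * x₂) ≤
      Real.exp (l₁ * x₁ + l₂ * x₂) - Real.exp (l₂ * x₁ + l₁ * x₂) ∧
    Real.exp (l₁ * x₁ + l₂ * x₂) - Real.exp (l₂ * x₁ + l₁ * x₂) ≤
      (2 * ((l₁ - l₂) * (x₁ - x₂)) / (1 + (l₁ - l₂) * (x₁ - x₂))) *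
        Real.exp (l₁ * x₁ + l₂ * x₂) := by
  have hu : 0 ≤ (l₁ - l₂) * (x₁ - x₂) := mul_nonneg (sub_nonneg.2 hl) (sub_nonneg.2 hx)
  have hfactor : Real.exp (l₁ * x₁ + l₂ * x₂) - Real.exp (l₂ * x₁ + l₁ * x₂) =
      (1 - Real.exp (-((l₁ - l₂) * (x₁ - x₂)))) * Real.exp (l₁ * x₁ + l₂ * x₂) := by
    rw [sub_mul, one_mul, ← Real.exp_add]
    ring_nf
  rw [hfactor]
  exact ⟨mul_le_mul_of_nonneg_right (div_one_add_le_one_sub_exp_neg hu) (Real.exp_pos _).le,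
    mul_le_mul_of_nonneg_right (one_sub_exp_neg_le_two_mul_div_one_add hu) (Real.exp_pos _).le⟩
end

section
/- (Iterative formula for spherical functions of type A in the complex case) Let n ≥ 2, let λ ∈ ℝⁿ be arbitrary, and let x ∈ ℝⁿ be weakly decreasing. Then ∑_{σ∈Sₙ} sgn(σ)·exp(∑_{k=1}^n λ_{σ(k)} x_k) = (∏_{i=1}^{n−1}(λ_i−λ_n)) · e^{λ_n·∑_{k=1}^n x_k} · ∫_{x_n}^{x_{n−1}} ⋯ ∫_{x_2}^{x_1} [∑_{τ∈S_{n−1}} sgn(τ)·exp(∑_{k=1}^{n−1} (λ_{τ(k)}−λ_n)·y_k)] dy_1 ⋯ dy_{n−1}, where the iterated integral is over y_k ∈ [x_{k+1}, x_k] for k = 1, …, n−1. -/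
open Finset MeasureTheory

/-- The integral of a product of exponentials over a box. -/
theorem setIntegral_Icc_exp_sum {n : ℕ} (c u v : Fin n → ℝ) (h : u ≤ v) :
    (∏ k, c k) * ∫ y in Set.Icc u v, Real.exp (∑ k, c k * y k) =
      ∏ k, (Real.exp (c k * v k) - Real.exp (c k * u k)) := by
  have hprod : ∫ y in Set.Icc u v, Real.exp (∑ k, c k * y k) =
      ∏ k, ∫ t in Set.Icc (u k) (v k), Real.exp (c k * t) := by
    rw [← Set.pi_univ_Icc, volume_pi, Measure.restrict_pi_pi]
    simp_rw [Real.exp_sum]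
    exact integral_fintype_prod_eq_prod (fun k t => Real.exp (c k * t))
  rw [hprod, ← Finset.prod_mul_distrib]
  refine Finset.prod_congr rfl fun k _ => ?_
  rw [integral_Icc_eq_integral_Ioc, ← intervalIntegral.integral_of_le (h k),
    intervalIntegral.mul_integral_comp_mul_left (f := Real.exp), integral_exp]

/-- A matrix whose last row consists of ones has the same determinant as the matrix of differences
of its consecutive columns, with the last row removed. -/
theorem det_eq_det_sub_succ_col {R : Type*} [CommRing R] {n : ℕ}
    (M : Matrix (Fin (n + 1)) (Fin (n + 1)) R) (hM : ∀ k, M (Fin.last n) k = 1) :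
    M.det = (Matrix.of fun i k : Fin n =>
      M i.castSucc k.castSucc - M i.castSucc k.succ).det := by
  let B : Matrix (Fin (n + 1)) (Fin (n + 1)) R := Matrix.of fun i =>
    Fin.cons (M i 0) fun k : Fin n => M i k.succ - M i k.castSucc
  have hB : M.det = B.det :=
    Matrix.det_eq_of_forall_col_eq_smul_add_pred (fun _ => 1) (by simp [B]) (by simp [B])
  have hsub : B.submatrix (Fin.last n).succAbove (Fin.succAbove 0) =
      -(Matrix.of fun i k : Fin n => M i.castSucc k.castSucc - M i.castSucc k.succ) := by
    ext i k
    simp [B]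
  rw [hB, Matrix.det_succ_row B (Fin.last n), Fin.sum_univ_succ, hsub, Matrix.det_neg]
  simp [B, hM, ← mul_assoc, ← mul_pow]

/-- Iterative formula for the spherical functions of type `A` in the complex case
(here `n = m + 2 ≥ 2`): for arbitrary `λ ∈ ℝⁿ` and weakly decreasing `x ∈ ℝⁿ`,
`∑_{σ∈Sₙ} sgn(σ) e^{∑ λ_{σ(k)} x_k}
  = (∏_{i=1}^{n−1}(λ_i−λ_n)) · e^{λ_n ∑ x_k} ·
    ∫_{y_k ∈ [x_{k+1},x_k]} ∑_{τ∈S_{n−1}} sgn(τ) e^{∑_{k=1}^{n−1} (λ_{τ(k)}−λ_n) y_k} dy`. -/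
theorem iterative_formula (m : ℕ) (lam : Fin (m + 2) → ℝ) (x : Fin (m + 2) → ℝ)
    (hx : Antitone x) :
    (∑ σ : Equiv.Perm (Fin (m + 2)), ((Equiv.Perm.sign σ : ℤ) : ℝ) *
        Real.exp (∑ k, lam (σ k) * x k)) =
      (∏ i : Fin (m + 1), (lam i.castSucc - lam (Fin.last (m + 1)))) *
        Real.exp (lam (Fin.last (m + 1)) * ∑ k, x k) *
        ∫ y in Set.Icc (fun k : Fin (m + 1) => x k.succ) (fun k : Fin (m + 1) => x k.castSucc),
          ∑ τ : Equiv.Perm (Fin (m + 1)), ((Equiv.Perm.sign τ : ℤ) : ℝ) *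
            Real.exp (∑ k : Fin (m + 1),
              (lam (τ k).castSucc - lam (Fin.last (m + 1))) * y k) := by
  have hdet : (∑ σ : Equiv.Perm (Fin (m + 2)), ((Equiv.Perm.sign σ : ℤ) : ℝ) *
      Real.exp (∑ k, lam (σ k) * x k)) = Real.exp (lam (Fin.last (m + 1)) * ∑ k, x k) *
        (Matrix.of fun i k => Real.exp ((lam i - lam (Fin.last (m + 1))) * x k)).det := by
    rw [Matrix.det_apply', Finset.mul_sum]
    refine Finset.sum_congr rfl fun σ _ => ?_
    simp only [Matrix.of_apply]
    rw [← Real.exp_sum, mul_left_comm, ← Real.exp_add, Finset.mul_sum,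
      ← Finset.sum_add_distrib]
    congr 3 with k
    ring
  rw [hdet, det_eq_det_sub_succ_col _ (by simp), Matrix.det_apply',
    integral_finsetSum _ fun τ _ => ?_]
  · rw [mul_comm (∏ i : Fin (m + 1), _), mul_assoc]
    congr 1
    rw [Finset.mul_sum]
    refine Finset.sum_congr rfl fun τ _ => ?_
    rw [integral_const_mul, mul_left_comm,
      ← Equiv.prod_comp τ (fun i => lam i.castSucc - lam (Fin.last (m + 1))),
      setIntegral_Icc_exp_sum (fun k => lam (τ k).castSucc - lam (Fin.last (m + 1)))
        _ _ fun k => hx k.castSucc_le_succ]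
    rfl
  · exact Continuous.integrableOn_Icc (by fun_prop)
end

section
/- (Inverse spherical Fourier transform of the flat heat kernel, type A) For every n ≥ 1, every t > 0, and all x, y ∈ ℝⁿ: ∫_{ℝⁿ} e^{−t|λ|²} · (∑_{σ∈Sₙ} sgn(σ)·exp(i·∑_{k=1}^n λ_{σ(k)} x_k)) · conj(∑_{τ∈Sₙ} sgn(τ)·exp(i·∑_{k=1}^n λ_{τ(k)} y_k)) dλ = n!·(π/t)^{n/2}·e^{−(|x|²+|y|²)/(4t)}·∑_{σ∈Sₙ} sgn(σ)·exp((1/(2t))·∑_{k=1}^n x_{σ(k)} y_k). (This is the type-A instance of the formula p_t^W(X,Y) = C·∫ e^{−|λ|²t} ψ_{iλ}(X) ψ_{−iλ}(Y) π(λ)² dλ for the heat kernel of the flat complex symmetric space, since ψ_{iλ}(x) = c·(∑_σ sgn(σ)e^{i⟨σλ,x⟩})/(π(iλ)π(x)).) -/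
open Finset MeasureTheory

/-- The Gaussian integral of a product of two plane waves with frequencies `u` and `-v`. -/
theorem integral_gaussian_mul_planeWave {ι : Type*} [Fintype ι] {t : ℝ} (ht : 0 < t)
    (u v : ι → ℝ) :
    ∫ lam : ι → ℝ, Complex.exp (-(t : ℂ) * ∑ k, (lam k : ℂ) ^ 2 +
        ∑ k, Complex.I * ((u k : ℂ) - v k) * lam k) =
      (((Real.pi / t) ^ ((Fintype.card ι : ℝ) / 2) *
        Real.exp (-((∑ k, u k ^ 2) + ∑ k, v k ^ 2) / (4 * t)) *
        Real.exp ((1 / (2 * t)) * ∑ k, u k * v k) : ℝ) : ℂ) := by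
  rw [GaussianFourier.integral_cexp_neg_mul_sum_add (by simpa using ht), mul_assoc,
    ← Real.exp_add, Complex.ofReal_mul, Complex.ofReal_cpow (by positivity), Complex.ofReal_exp]
  have hexp : (∑ k, (Complex.I * ((u k : ℂ) - v k)) ^ 2) / (4 * t) =
      ((-((∑ k, u k ^ 2) + ∑ k, v k ^ 2) / (4 * t) +
        (1 / (2 * t)) * ∑ k, u k * v k : ℝ) : ℂ) := by
    have hsum : ∑ k, (Complex.I * ((u k : ℂ) - v k)) ^ 2 =
        -((∑ k, (u k : ℂ) ^ 2) + ∑ k, (v k : ℂ) ^ 2) + 2 * ∑ k, (u k : ℂ) * v k := by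
      rw [Finset.mul_sum, ← Finset.sum_add_distrib, ← Finset.sum_neg_distrib,
        ← Finset.sum_add_distrib]
      refine Finset.sum_congr rfl fun k _ => ?_
      rw [mul_pow, Complex.I_sq]
      ring
    have ht' : (t : ℂ) ≠ 0 := by exact_mod_cast ht.ne'
    rw [hsum]
    push_cast
    field_simp
    ring
  rw [hexp]
  push_cast
  rfl

/-- Expansion of a Gaussian times two alternating sums of plane waves into Gaussians with a
linear term. -/
theorem gaussian_mul_alternating_mul_conj_alternating {ι : Type*} [Fintype ι] [DecidableEq ι]
    (t : ℝ) (x y lam : ι → ℝ) :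
    (Real.exp (-t * ∑ k, lam k ^ 2) : ℂ) *
        (∑ σ : Equiv.Perm ι, ((Equiv.Perm.sign σ : ℤ) : ℂ) *
          Complex.exp (Complex.I * ((∑ k, lam (σ k) * x k : ℝ) : ℂ))) *
        (starRingEnd ℂ)
          (∑ τ : Equiv.Perm ι, ((Equiv.Perm.sign τ : ℤ) : ℂ) *
            Complex.exp (Complex.I * ((∑ k, lam (τ k) * y k : ℝ) : ℂ))) =
      ∑ σ : Equiv.Perm ι, ∑ τ : Equiv.Perm ι,
        (((Equiv.Perm.sign σ : ℤ) : ℂ) * ((Equiv.Perm.sign τ : ℤ) : ℂ)) *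
          Complex.exp (-(t : ℂ) * ∑ k, (lam k : ℂ) ^ 2 +
            ∑ k, Complex.I * ((x (σ⁻¹ k) : ℂ) - y (τ⁻¹ k)) * lam k) := by
  have hperm (σ : Equiv.Perm ι) (z : ι → ℝ) :
      ∑ k, lam (σ k) * z k = ∑ k, lam k * z (σ⁻¹ k) := by
    rw [← Equiv.sum_comp σ fun k => lam k * z (σ⁻¹ k)]
    simp
  rw [map_sum, mul_assoc, Finset.sum_mul_sum, Finset.mul_sum]
  refine Finset.sum_congr rfl fun σ _ => ?_
  rw [Finset.mul_sum]
  refine Finset.sum_congr rfl fun τ _ => ?_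
  have hexp : -(t : ℂ) * ∑ k, (lam k : ℂ) ^ 2 +
      ∑ k, Complex.I * ((x (σ⁻¹ k) : ℂ) - y (τ⁻¹ k)) * lam k =
      ((-t * ∑ k, lam k ^ 2 : ℝ) : ℂ) + (Complex.I * ((∑ k, lam (σ k) * x k : ℝ) : ℂ) +
        -Complex.I * ((∑ k, lam (τ k) * y k : ℝ) : ℂ)) := by
    rw [hperm, hperm]
    push_cast
    rw [Finset.mul_sum (f := fun k => (lam k : ℂ) * x (σ⁻¹ k)),
      Finset.mul_sum (f := fun k => (lam k : ℂ) * y (τ⁻¹ k)), ← Finset.sum_add_distrib]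
    congr 1
    refine Finset.sum_congr rfl fun k _ => ?_
    ring
  rw [hexp, Complex.exp_add, Complex.exp_add, map_mul, ← Complex.exp_conj, map_mul,
    Complex.conj_I, Complex.conj_ofReal, map_intCast, Complex.ofReal_exp]
  ring

/-- A double alternating sum of a function of the relative permutation collapses to a single
alternating sum. -/
theorem sum_sum_sign_mul_sign_mul_inv_mul {ι R : Type*} [Fintype ι] [DecidableEq ι]
    [CommRing R] (f : Equiv.Perm ι → R) :
    ∑ σ : Equiv.Perm ι, ∑ τ : Equiv.Perm ι,
        (((Equiv.Perm.sign σ : ℤ) : R) * ((Equiv.Perm.sign τ : ℤ) : R)) * f (σ⁻¹ * τ) =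
      ((Fintype.card ι).factorial : R) *
        ∑ ρ : Equiv.Perm ι, ((Equiv.Perm.sign ρ : ℤ) : R) * f ρ := by
  have hinner (σ : Equiv.Perm ι) : ∑ τ : Equiv.Perm ι,
      (((Equiv.Perm.sign σ : ℤ) : R) * ((Equiv.Perm.sign τ : ℤ) : R)) * f (σ⁻¹ * τ) =
        ∑ ρ : Equiv.Perm ι, ((Equiv.Perm.sign ρ : ℤ) : R) * f ρ := by
    rw [← Equiv.sum_comp (Equiv.mulLeft σ⁻¹) fun ρ => ((Equiv.Perm.sign ρ : ℤ) : R) * f ρ]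
    refine Finset.sum_congr rfl fun τ _ => ?_
    simp
  simp_rw [hinner]
  rw [Finset.sum_const, Finset.card_univ, Fintype.card_perm, nsmul_eq_mul]

/-- Inverse spherical Fourier transform of the flat heat kernel, type `A`: for `t > 0` and
`x, y ∈ ℝⁿ`,
`∫_{ℝⁿ} e^{−t|λ|²} (∑_σ sgn σ e^{i∑ λ_{σ(k)} x_k}) conj(∑_τ sgn τ e^{i∑ λ_{τ(k)} y_k}) dλ
  = n! (π/t)^{n/2} e^{−(|x|²+|y|²)/(4t)} ∑_σ sgn σ e^{(1/(2t))∑ x_{σ(k)} y_k}`. -/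
theorem inverse_spherical_fourier_heat (n : ℕ) (hn : 1 ≤ n) (t : ℝ) (ht : 0 < t)
    (x y : Fin n → ℝ) :
    (∫ lam : Fin n → ℝ,
        (Real.exp (-t * ∑ k, lam k ^ 2) : ℂ) *
          (∑ σ : Equiv.Perm (Fin n), ((Equiv.Perm.sign σ : ℤ) : ℂ) *
            Complex.exp (Complex.I * ((∑ k, lam (σ k) * x k : ℝ) : ℂ))) *
          (starRingEnd ℂ)
            (∑ τ : Equiv.Perm (Fin n), ((Equiv.Perm.sign τ : ℤ) : ℂ) *
              Complex.exp (Complex.I * ((∑ k, lam (τ k) * y k : ℝ) : ℂ)))) =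
      (((Nat.factorial n : ℝ) * (Real.pi / t) ^ ((n : ℝ) / 2) *
          Real.exp (-((∑ k, x k ^ 2) + ∑ k, y k ^ 2) / (4 * t)) *
          ∑ σ : Equiv.Perm (Fin n), ((Equiv.Perm.sign σ : ℤ) : ℝ) *
            Real.exp ((1 / (2 * t)) * ∑ k, x (σ k) * y k) : ℝ) : ℂ) := by
  simp_rw [gaussian_mul_alternating_mul_conj_alternating]
  have hint (σ τ : Equiv.Perm (Fin n)) : Integrable fun lam : Fin n → ℝ =>
      (((Equiv.Perm.sign σ : ℤ) : ℂ) * ((Equiv.Perm.sign τ : ℤ) : ℂ)) *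
        Complex.exp (-(t : ℂ) * ∑ k, (lam k : ℂ) ^ 2 +
          ∑ k, Complex.I * ((x (σ⁻¹ k) : ℂ) - y (τ⁻¹ k)) * lam k) :=
    (GaussianFourier.integrable_cexp_neg_mul_sum_add (by simpa using ht) _).const_mul _
  rw [integral_finsetSum _ fun σ _ => integrable_finsetSum _ fun τ _ => hint σ τ]
  simp_rw [integral_finsetSum _ fun τ _ => hint _ τ, integral_const_mul]
  have hterm (σ τ : Equiv.Perm (Fin n)) :
      ∫ lam : Fin n → ℝ, Complex.exp (-(t : ℂ) * ∑ k, (lam k : ℂ) ^ 2 +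
          ∑ k, Complex.I * ((x (σ⁻¹ k) : ℂ) - y (τ⁻¹ k)) * lam k) =
        (((Real.pi / t) ^ ((n : ℝ) / 2) *
          Real.exp (-((∑ k, x k ^ 2) + ∑ k, y k ^ 2) / (4 * t)) *
          Real.exp ((1 / (2 * t)) * ∑ k, x ((σ⁻¹ * τ) k) * y k) : ℝ) : ℂ) := by
    rw [integral_gaussian_mul_planeWave ht (fun k => x (σ⁻¹ k)) fun k => y (τ⁻¹ k),
      Equiv.sum_comp σ⁻¹ fun k => x k ^ 2, Equiv.sum_comp τ⁻¹ fun k => y k ^ 2,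
      ← Equiv.sum_comp τ fun k => x (σ⁻¹ k) * y (τ⁻¹ k)]
    simp
  simp_rw [hterm]
  rw [sum_sum_sign_mul_sign_mul_inv_mul fun ρ : Equiv.Perm (Fin n) =>
    (((Real.pi / t) ^ ((n : ℝ) / 2) *
      Real.exp (-((∑ k, x k ^ 2) + ∑ k, y k ^ 2) / (4 * t)) *
      Real.exp ((1 / (2 * t)) * ∑ k, x (ρ k) * y k) : ℝ) : ℂ), Fintype.card_fin]
  norm_cast
  rw [Finset.mul_sum, Finset.mul_sum]
  refine Finset.sum_congr rfl fun ρ _ => ?_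
  ring
end
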